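/- arXiv:2007.09320 — 2 statements merged into one kernel-verified Lean document; each statement's English description precedes it below -/
import Mathlib

section
/- For probability measures μ₁,…,μₙ on ℝ, t ∈ [0,1) and s ∈ (0, 1−t], one has sup_{ν ∈ Λ(μ₁,…,μₙ)} R_{t,s}(ν) = sup_{ν ∈ Λ(μ₁^{(1−t−s)+},…,μₙ^{(1−t−s)+})} LES_{s/(t+s)}(ν), and sup_{ν ∈ Λ(μ₁,…,μₙ)} q⁺_t(ν) = sup_{ν ∈ Λ(μ₁^{t+},…,μₙ^{t+})} q⁺_0(ν). -/
/-! Write `F` for a cdf, `S` for the aggregate `X₁ + ⋯ + Xₙ`, and `p` for the level at which the tails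
are taken (`p = 1 - t - s` in the first claim, `p = t` in the second). For `0 < p < 1` both claims
follow from a comparison of quantiles, valid at all levels simultaneously:

* every coupling of the `p`-tails, with aggregate law `ν'`, extends to a coupling of the margins
  with aggregate law `ν` such that `q⁺_w(ν') ≤ q⁺_{p+(1-p)w}(ν)` for all `w ∈ [0, 1)`
  (`exists_extend_tail`). Mix it, with weight `1 - p`, with the comonotone coupling of the lower
  parts of the margins; then `F_ν ≤ (1 - p) F_ν' + p`.
* every coupling of the margins gives rise to a coupling of the `p`-tails with the reverse
  inequality (`exists_raise_to_tail`). Condition on the upper event of `S` of probability `1 - p`,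
  so that `S` acquires the `p`-tail of its own law (`exists_conditioned_tail`). Conditioning on an
  event of probability `1 - p` yields margins stochastically dominated by their `p`-tails, so each
  coordinate can be raised to its tail law (`exists_raise`), which only increases `S`. One common
  uniform variable may serve for all coordinates, as only the margins are prescribed.

Evaluating at `w = 0` gives the second claim. Two sets of reals each dominated by the
other have the same upper bounds and hence the same `sSup`, so no boundedness is needed. If `p = 0` the
tails are the margins and there is nothing to prove. The first claim follows by integrating over
`w ∈ (0, s / (t + s))`, provided the integrals converge. They do when `t > 0`, for then the levels
stay away from `1`. When `t = 0` they converge if and only if the positive part of the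
aggregate has finite mean (`posMean`), which holds when all margins have that property.

There remains `t = 0` with some margin `μⱼ` such that `E[Xⱼ⁺] = ∞`, where real-valued integrals and
suprema take default values. The tails are bounded below, so all expectations on the right diverge
and the right side is `0`. On the left, either every integral diverges, and the supremum is `0`;
or some coupling has `E[S⁺] < ∞`, through cancellation between the coordinates. In that case,
making `Xⱼ` independent of the other coordinates on a large cube produces finite but arbitrarily
large values (`exists_large_posMean`), and the supremum of an unbounded set is again `0`.
-/

open MeasureTheory Set
open scoped ENNReal

noncomputable section

/-- Left quantile `q⁻_t(μ) = inf {x | μ(-∞,x] ≥ t}`. -/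
def leftQuantile (μ : MeasureTheory.Measure ℝ) (t : ℝ) : ℝ :=
  sInf {x : ℝ | t ≤ (μ (Set.Iic x)).toReal}

/-- Right quantile `q⁺_t(μ) = inf {x | μ(-∞,x] > t}`. -/
def rightQuantile (μ : MeasureTheory.Measure ℝ) (t : ℝ) : ℝ :=
  sInf {x : ℝ | t < (μ (Set.Iic x)).toReal}

/-- Range Value-at-Risk `R_{β,α}(μ) = (1/α) ∫_β^{β+α} q⁺_{1-t}(μ) dt`. -/
def RVaR (β α : ℝ) (μ : MeasureTheory.Measure ℝ) : ℝ :=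
  α⁻¹ * ∫ t in β..(β + α), rightQuantile μ (1 - t)

/-- `Λ(μ₁,…,μₙ)`: the set of distributions of `X₁ + ⋯ + Xₙ` over all random vectors
with marginals `μ₁,…,μₙ`, i.e. pushforwards under the sum map of joint laws on `Fin n → ℝ`
whose one-dimensional marginals are the `μᵢ`. -/
def AggSet {n : ℕ} (μs : Fin n → MeasureTheory.Measure ℝ) :
    Set (MeasureTheory.Measure ℝ) :=
  {ν | ∃ π : MeasureTheory.Measure (Fin n → ℝ), MeasureTheory.IsProbabilityMeasure π ∧
      (∀ i, π.map (fun x => x i) = μs i) ∧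
      ν = π.map (fun x => ∑ i, x i)}

/-- The `t`-tail distribution `μ^{t+}`: the law of `q⁻_U(μ)` for `U` uniform on `[t,1]`;
its cdf is `x ↦ max ((μ(-∞,x] - t)/(1-t), 0)`. -/
def upperTail (μ : MeasureTheory.Measure ℝ) (t : ℝ) : MeasureTheory.Measure ℝ :=
  ((ENNReal.ofReal (1 - t))⁻¹ • MeasureTheory.volume.restrict (Set.Ioc t 1)).map
    (leftQuantile μ)

/-- The lower `t`-tail distribution `μ^{t-}`: the law of `q⁻_U(μ)` for `U` uniform on `[0,t]`;
its cdf is `x ↦ min (μ(-∞,x]/t, 1)`. -/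
def lowerTail (μ : MeasureTheory.Measure ℝ) (t : ℝ) : MeasureTheory.Measure ℝ :=
  ((ENNReal.ofReal t)⁻¹ • MeasureTheory.volume.restrict (Set.Ioc 0 t)).map
    (leftQuantile μ)

/-- `μ` is absolutely continuous with a density that is decreasing on its support. -/
def HasDecreasingDensity (μ : MeasureTheory.Measure ℝ) : Prop :=
  ∃ f : ℝ → ℝ, (∀ x, 0 ≤ f x) ∧
    μ = MeasureTheory.volume.withDensity (fun x => ENNReal.ofReal (f x)) ∧
    AntitoneOn f (Function.support f)

/-- `μ` is absolutely continuous with a density that is increasing on its support. -/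
def HasIncreasingDensity (μ : MeasureTheory.Measure ℝ) : Prop :=
  ∃ f : ℝ → ℝ, (∀ x, 0 ≤ f x) ∧
    μ = MeasureTheory.volume.withDensity (fun x => ENNReal.ofReal (f x)) ∧
    MonotoneOn f (Function.support f)

/-- `μ` admits a decreasing density beyond its `t`-quantile. -/
def DecreasingDensityBeyond (μ : MeasureTheory.Measure ℝ) (t : ℝ) : Prop :=
  HasDecreasingDensity (upperTail μ t)

/-- `μ` admits an increasing density beyond its `t`-quantile. -/
def IncreasingDensityBeyond (μ : MeasureTheory.Measure ℝ) (t : ℝ) : Prop :=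
  HasIncreasingDensity (upperTail μ t)

/-- `μ` admits an increasing density below its `t`-quantile. -/
def IncreasingDensityBelow (μ : MeasureTheory.Measure ℝ) (t : ℝ) : Prop :=
  HasIncreasingDensity (lowerTail μ t)

/-- `μ` admits a decreasing density below its `t`-quantile. -/
def DecreasingDensityBelow (μ : MeasureTheory.Measure ℝ) (t : ℝ) : Prop :=
  HasDecreasingDensity (lowerTail μ t)

/-- `(μ₁,…,μₙ)` is jointly mixable: some point mass `δ_C` belongs to `Λ(μ₁,…,μₙ)`. -/
def JointlyMixable {n : ℕ} (μs : Fin n → MeasureTheory.Measure ℝ) : Prop :=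
  ∃ C : ℝ, MeasureTheory.Measure.dirac C ∈ AggSet μs


open ProbabilityTheory

/-! ### Quantiles and tail distributions -/

section Quantiles

variable (μ : Measure ℝ)

lemma bddBelow_le_cdf {u : ℝ} (hu : 0 < u) : BddBelow {x | u ≤ cdf μ x} := by
  obtain ⟨a, ha⟩ := ((tendsto_cdf_atBot μ).eventually (gt_mem_nhds hu)).exists
  refine ⟨a, fun x hx => ?_⟩
  by_contra! h
  have := monotone_cdf μ h.le
  exact absurd (this.trans_lt ha) (not_lt.2 hx)

lemma bddBelow_lt_cdf {u : ℝ} (hu : 0 < u) : BddBelow {x | u < cdf μ x} :=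
  (bddBelow_le_cdf μ hu).mono (ofPred_subset_ofPred.2 fun _ hx => le_of_lt hx)

lemma nonempty_lt_cdf {u : ℝ} (hu : u < 1) : {x | u < cdf μ x}.Nonempty :=
  ((tendsto_cdf_atTop μ).eventually (lt_mem_nhds hu)).exists

lemma nonempty_le_cdf {u : ℝ} (hu : u < 1) : {x | u ≤ cdf μ x}.Nonempty :=
  (nonempty_lt_cdf μ hu).mono (ofPred_subset_ofPred.2 fun _ hx => le_of_lt hx)

/-- The cdf is at least `u` at any point above which it is everywhere at least `u`. -/
lemma le_cdf_of_forall_gt {u x : ℝ} (h : ∀ y, x < y → u ≤ cdf μ y) : u ≤ cdf μ x := by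
  have h1 := ((cdf μ).right_continuous x).tendsto.mono_left
    (nhdsWithin_mono x Ioi_subset_Ici_self)
  exact ge_of_tendsto h1 (by filter_upwards [self_mem_nhdsWithin] with y hy using h y hy)

variable [IsProbabilityMeasure μ]

lemma leftQuantile_eq (u : ℝ) : leftQuantile μ u = sInf {x | u ≤ cdf μ x} := by
  simp only [cdf_eq_real]; rfl

lemma rightQuantile_eq (u : ℝ) : rightQuantile μ u = sInf {x | u < cdf μ x} := by
  simp only [cdf_eq_real]; rfl

lemma leftQuantile_le_iff {u x : ℝ} (hu : u ∈ Ioo (0 : ℝ) 1) :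
    leftQuantile μ u ≤ x ↔ u ≤ cdf μ x := by
  rw [leftQuantile_eq]
  refine ⟨fun h => le_cdf_of_forall_gt μ fun y hy => ?_,
    fun h => csInf_le (bddBelow_le_cdf μ hu.1) h⟩
  obtain ⟨z, hz, hzy⟩ := exists_lt_of_csInf_lt (nonempty_le_cdf μ hu.2) (h.trans_lt hy)
  exact le_trans hz (monotone_cdf μ hzy.le)

lemma le_cdf_of_rightQuantile_le {u x : ℝ} (hu : u < 1) (h : rightQuantile μ u ≤ x) :
    u ≤ cdf μ x := by
  rw [rightQuantile_eq] at h
  refine le_cdf_of_forall_gt μ fun y hy => ?_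
  obtain ⟨z, hz, hzy⟩ := exists_lt_of_csInf_lt (nonempty_lt_cdf μ hu) (h.trans_lt hy)
  exact le_trans (le_of_lt hz) (monotone_cdf μ hzy.le)

lemma rightQuantile_le_of_lt_cdf {u x : ℝ} (hu : 0 < u) (h : u < cdf μ x) :
    rightQuantile μ u ≤ x := by
  rw [rightQuantile_eq]; exact csInf_le (bddBelow_lt_cdf μ hu) h

lemma rightQuantile_mono {u v : ℝ} (hb : BddBelow {x | u < cdf μ x}) (huv : u ≤ v)
    (hv : v < 1) : rightQuantile μ u ≤ rightQuantile μ v := by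
  simp only [rightQuantile_eq]
  exact csInf_le_csInf hb (nonempty_lt_cdf μ hv) fun x hx => lt_of_le_of_lt huv hx

lemma rightQuantile_monotoneOn {p : ℝ} (hp : 0 < p) :
    MonotoneOn (rightQuantile μ) (Ico p 1) := fun _ hu _ hv huv =>
  rightQuantile_mono μ (bddBelow_lt_cdf μ (hp.trans_le hu.1)) huv hv.2

lemma rightQuantile_monotoneOn_Ioo : MonotoneOn (rightQuantile μ) (Ioo 0 1) :=
  fun _ hu _ hv huv => rightQuantile_mono μ (bddBelow_lt_cdf μ hu.1) huv hv.2

/-- Right quantiles are ordered as soon as the level sets of the two cdfs are nested. -/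
lemma rightQuantile_le_rightQuantile (ν : Measure ℝ) [IsProbabilityMeasure ν] {u v : ℝ}
    (hb : BddBelow {x | u < cdf μ x}) (hv : v < 1)
    (h : ∀ x, v < cdf ν x → u < cdf μ x) : rightQuantile μ u ≤ rightQuantile ν v := by
  simp only [rightQuantile_eq]
  exact csInf_le_csInf hb (nonempty_lt_cdf ν hv) h

/-- The left quantile is a Borel function on all of `ℝ`: it is monotone on `(0, 1)` and constant
(with the value `sInf ∅ = sInf univ = 0`) below `0` and above `1`. -/
lemma measurable_leftQuantile : Measurable (leftQuantile μ) := by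
  have h0 : ∀ u ≤ 0, leftQuantile μ u = 0 := fun u hu => by
    rw [leftQuantile_eq]
    have : {x | u ≤ cdf μ x} = univ :=
      eq_univ_of_forall fun x => le_trans hu (cdf_nonneg μ x)
    rw [this, Real.sInf_univ]
  have h1 : ∀ u, 1 < u → leftQuantile μ u = 0 := fun u hu => by
    rw [leftQuantile_eq]
    have : {x | u ≤ cdf μ x} = ∅ :=
      eq_empty_of_forall_notMem fun x hx => absurd (cdf_le_one μ x) (not_le.2 (hu.trans_le hx))
    rw [this, Real.sInf_empty]
  refine measurable_of_Iic fun x => ?_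
  have : leftQuantile μ ⁻¹' Iic x = (Ioo 0 1 ∩ Iic (cdf μ x)) ∪
      ((Iic 0 ∪ Ioi 1) ∩ {_u | 0 ≤ x}) ∪ ({1} ∩ {_u | leftQuantile μ 1 ≤ x}) := by
    ext u
    rcases le_or_gt u 0 with hu | hu
    · have : ¬ (1 < u) := by linarith
      have h3 : u ≠ 1 := by linarith
      simp [h0 u hu, hu, not_lt.2 hu, h3]
    · rcases lt_trichotomy u 1 with h | h | h
      · have := leftQuantile_le_iff μ (x := x) ⟨hu, h⟩
        simp [hu, h, this, not_le.2 hu, h.ne, not_lt.2 h.le]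
      · subst h; simp
      · simp [h1 u h, hu, h, not_lt.2 h.le, h.ne']
  rw [this]
  exact ((measurableSet_Ioo.inter measurableSet_Iic).union
    ((measurableSet_Iic.union measurableSet_Ioi).inter (MeasurableSet.const _))).union
    ((measurableSet_singleton 1).inter (MeasurableSet.const _))

lemma aemeasurable_rightQuantile :
    AEMeasurable (rightQuantile μ) (volume.restrict (Ioo 0 1)) :=
  aemeasurable_restrict_of_monotoneOn measurableSet_Ioo (rightQuantile_monotoneOn_Ioo μ)

/-- Inverse transform sampling with the right quantile. -/
lemma map_rightQuantile : (volume.restrict (Ioo 0 1)).map (rightQuantile μ) = μ := by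
  have : IsFiniteMeasure (volume.restrict (Ioo (0 : ℝ) 1)) := ⟨by simp⟩
  refine Measure.ext_of_Iic _ _ fun x => ?_
  rw [Measure.map_apply_of_aemeasurable (aemeasurable_rightQuantile μ) measurableSet_Iic,
    Measure.restrict_apply' measurableSet_Ioo, ← ofReal_cdf]
  apply le_antisymm
  · refine (measure_mono (t := Ioc 0 (cdf μ x)) ?_).trans (by simp)
    rintro u ⟨hu, h0, h1⟩
    exact ⟨h0, le_cdf_of_rightQuantile_le μ h1 hu⟩
  · refine le_trans (by simp) (measure_mono (s := Ioo 0 (cdf μ x)) ?_)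
    rintro u ⟨h0, h1⟩
    exact ⟨rightQuantile_le_of_lt_cdf μ h0 h1, h0, h1.trans_le (cdf_le_one μ x)⟩

lemma upperTail_apply_Iic {p : ℝ} (hp : p ∈ Ico (0 : ℝ) 1) (x : ℝ) :
    upperTail μ p (Iic x) = ENNReal.ofReal ((cdf μ x - p) / (1 - p)) := by
  have hr : 0 < 1 - p := by linarith [hp.2]
  rw [upperTail, Measure.map_apply (measurable_leftQuantile μ) measurableSet_Iic,
    Measure.smul_apply, ← Measure.restrict_congr_set (Ioo_ae_eq_Ioc),
    Measure.restrict_apply' measurableSet_Ioo, ENNReal.ofReal_div_of_pos hr, smul_eq_mul,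
    mul_comm, ENNReal.div_eq_inv_mul, mul_comm]
  congr 1
  apply le_antisymm
  · refine (measure_mono (t := Ioc p (cdf μ x)) ?_).trans (by simp)
    rintro u ⟨hu, h0, h1⟩
    exact ⟨h0, (leftQuantile_le_iff μ ⟨hp.1.trans_lt h0, h1⟩).1 hu⟩
  · refine le_trans (by simp) (measure_mono (s := Ioo p (cdf μ x)) ?_)
    rintro u ⟨h0, h1⟩
    have h2 := h1.trans_le (cdf_le_one μ x)
    exact ⟨(leftQuantile_le_iff μ ⟨hp.1.trans_lt h0, h2⟩).2 h1.le, h0, h2⟩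

lemma isProbabilityMeasure_upperTail {p : ℝ} (hp : p < 1) :
    IsProbabilityMeasure (upperTail μ p) := by
  have hr : 0 < 1 - p := by linarith
  constructor
  rw [upperTail, Measure.map_apply (measurable_leftQuantile μ) MeasurableSet.univ]
  simp only [preimage_univ, Measure.smul_apply, Measure.restrict_apply_univ, Real.volume_Ioc,
    smul_eq_mul]
  exact ENNReal.inv_mul_cancel (by simpa using hp) ENNReal.ofReal_ne_top

lemma cdf_upperTail {p : ℝ} (hp : p ∈ Ico (0 : ℝ) 1) (x : ℝ) :
    cdf (upperTail μ p) x = max ((cdf μ x - p) / (1 - p)) 0 := by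
  have := isProbabilityMeasure_upperTail μ hp.2
  rw [cdf_eq_real, Measure.real, upperTail_apply_Iic μ hp, ENNReal.toReal_ofReal']

lemma upperTail_zero : upperTail μ 0 = μ := by
  have := isProbabilityMeasure_upperTail μ (zero_lt_one)
  refine Measure.ext_of_Iic _ _ fun x => ?_
  rw [upperTail_apply_Iic μ (by simp), ← ofReal_cdf]
  simp

/-- Inverse transform sampling with the left quantile. -/
lemma map_leftQuantile : (volume.restrict (Ioc 0 1)).map (leftQuantile μ) = μ := by
  conv_rhs => rw [← upperTail_zero μ]
  simp [upperTail]

/-- `μ` is the mixture of its upper tail, with weight `1 - p`, and its lower tail. -/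
lemma smul_upperTail_add {p : ℝ} (hp : p ∈ Ico (0 : ℝ) 1) :
    ENNReal.ofReal (1 - p) • upperTail μ p +
      (volume.restrict (Ioc 0 p)).map (leftQuantile μ) = μ := by
  have hr : ENNReal.ofReal (1 - p) ≠ 0 := by simpa using hp.2
  rw [upperTail, Measure.map_smul, smul_smul, ENNReal.mul_inv_cancel hr ENNReal.ofReal_ne_top,
    one_smul, ← Measure.map_add _ _ (measurable_leftQuantile μ),
    ← Measure.restrict_union (Set.disjoint_left.2 fun x h1 h2 => not_lt.2 h2.2 h1.1)
      measurableSet_Ioc, union_comm, Ioc_union_Ioc_eq_Ioc hp.1 hp.2.le, map_leftQuantile]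

end Quantiles

/-! ### Couplings on the line -/

section Coupling

/-- Any coupling `κ` of the law of `X` with another law on `ℝ` is realised by a function of `X` and
of an independent uniform variable; the function depends on `κ` only. -/
lemma exists_randomization (κ : Measure (ℝ × ℝ)) [IsProbabilityMeasure κ] :
    ∃ f : ℝ → unitInterval → ℝ, Measurable (Function.uncurry f) ∧
      ∀ {Ω : Type} [MeasurableSpace Ω] (P : Measure Ω) [IsProbabilityMeasure P] (X : Ω → ℝ),
        Measurable X → P.map X = κ.fst →
        (P.prod volume).map (fun z => (X z.1, f (X z.1) z.2)) = κ := by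
  obtain ⟨f, hf, hfκ⟩ := Kernel.exists_measurable_map_eq_unitInterval κ.condKernel
  refine ⟨f, hf, fun {Ω} _ P _ X hX hPX => ?_⟩
  have hg : Measurable (fun z : ℝ × unitInterval => (z.1, f z.1 z.2)) :=
    measurable_fst.prodMk hf
  have h1 : (P.prod volume).map (Prod.map X id) = κ.fst.prod (volume : Measure unitInterval) := by
    rw [← Measure.map_prod_map P volume hX measurable_id, Measure.map_id, hPX]
  have h2 : (κ.fst.prod (volume : Measure unitInterval)).map (fun z => (z.1, f z.1 z.2)) = κ := by
    conv_rhs => rw [← κ.disintegrate κ.condKernel]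
    ext s hs
    rw [Measure.map_apply hg hs, Measure.prod_apply (hg hs), Measure.compProd_apply hs]
    refine lintegral_congr fun a => ?_
    have hfa : Measurable (f a) := hf.comp measurable_prodMk_left
    rw [← hfκ a, Measure.map_apply hfa (measurable_prodMk_left hs)]
    rfl
  rw [← h1, Measure.map_map hg (hX.prodMap measurable_id)] at h2
  exact h2

instance : IsProbabilityMeasure (volume.restrict (Ioc (0 : ℝ) 1)) := ⟨by simp⟩

lemma leftQuantile_mono_of_cdf_le (ν τ : Measure ℝ) [IsProbabilityMeasure ν]
    [IsProbabilityMeasure τ] (h : ∀ x, cdf τ x ≤ cdf ν x) {u : ℝ} (hu : u ∈ Ioo (0 : ℝ) 1) :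
    leftQuantile ν u ≤ leftQuantile τ u :=
  (leftQuantile_le_iff ν hu).2 (((leftQuantile_le_iff τ hu).1 le_rfl).trans (h _))

/-- Strassen's theorem on the line: a variable can be raised to any stochastically larger law,
using the quantile coupling of the two laws. -/
lemma exists_raise (ν τ : Measure ℝ) [IsProbabilityMeasure ν] [IsProbabilityMeasure τ]
    (h : ∀ x, cdf τ x ≤ cdf ν x) :
    ∃ f : ℝ → unitInterval → ℝ, Measurable (Function.uncurry f) ∧
      ∀ {Ω : Type} [MeasurableSpace Ω] (P : Measure Ω) [IsProbabilityMeasure P] (X : Ω → ℝ),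
        Measurable X → P.map X = ν →
        (P.prod volume).map (fun z => f (X z.1) z.2) = τ ∧
        ∀ᵐ z ∂(P.prod volume), X z.1 ≤ f (X z.1) z.2 := by
  have hm : Measurable (fun u => (leftQuantile ν u, leftQuantile τ u)) :=
    (measurable_leftQuantile ν).prodMk (measurable_leftQuantile τ)
  set κ : Measure (ℝ × ℝ) := (volume.restrict (Ioc (0 : ℝ) 1)).map
    (fun u => (leftQuantile ν u, leftQuantile τ u)) with hκ
  have : IsProbabilityMeasure κ := Measure.isProbabilityMeasure_map hm.aemeasurable
  have hfst : κ.fst = ν := by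
    rw [Measure.fst, hκ, Measure.map_map measurable_fst hm]
    exact map_leftQuantile ν
  have hsnd : κ.snd = τ := by
    rw [Measure.snd, hκ, Measure.map_map measurable_snd hm]
    exact map_leftQuantile τ
  have hle : ∀ᵐ z ∂κ, z.1 ≤ z.2 := by
    rw [hκ, ae_map_iff hm.aemeasurable (measurableSet_le measurable_fst measurable_snd),
      ← Measure.restrict_congr_set Ioo_ae_eq_Ioc]
    exact (ae_restrict_iff' measurableSet_Ioo).2
      (Filter.Eventually.of_forall fun u hu => leftQuantile_mono_of_cdf_le ν τ h hu)
  obtain ⟨f, hf, hfκ⟩ := exists_randomization κ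
  refine ⟨f, hf, fun {Ω} _ P _ X hX hPX => ?_⟩
  have key := hfκ P X hX (hPX.trans hfst.symm)
  have hm' : Measurable (fun z : Ω × unitInterval => (X z.1, f (X z.1) z.2)) :=
    (hX.comp measurable_fst).prodMk (hf.comp ((hX.comp measurable_fst).prodMk measurable_snd))
  constructor
  · rw [← hsnd, Measure.snd, ← key, Measure.map_map measurable_snd hm']
    rfl
  · rw [← key, ae_map_iff hm'.aemeasurable (measurableSet_le measurable_fst measurable_snd)] at hle
    exact hle

/-- After adjoining an independent uniform variable, `S` is the left quantile of its law at a
uniform level; `Q` is the law on `Ω` conditioned on this level exceeding `p`. Hence `S` has the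
`p`-tail law under `Q`, and since the conditioning event has probability `1 - p`, an event `A` has
`Q`-probability at least `(P(A) - p) / (1 - p)`. -/
lemma exists_conditioned_tail {Ω : Type} [MeasurableSpace Ω] (P : Measure Ω)
    [IsProbabilityMeasure P] (S : Ω → ℝ) (hS : Measurable S) {p : ℝ} (hp : p ∈ Ioo (0 : ℝ) 1) :
    ∃ Q : Measure Ω, IsProbabilityMeasure Q ∧ Q.map S = upperTail (P.map S) p ∧
      ∀ A, MeasurableSet A → (P.real A - p) / (1 - p) ≤ Q.real A := by
  have hr : 0 < 1 - p := by linarith [hp.2]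
  have hν : IsProbabilityMeasure (P.map S) := Measure.isProbabilityMeasure_map hS.aemeasurable
  set ν := P.map S with hνdef
  have hm : Measurable (fun u => (leftQuantile ν u, u)) :=
    (measurable_leftQuantile ν).prodMk measurable_id
  set κ : Measure (ℝ × ℝ) := (volume.restrict (Ioc (0 : ℝ) 1)).map
    (fun u => (leftQuantile ν u, u)) with hκ
  have : IsProbabilityMeasure κ := Measure.isProbabilityMeasure_map hm.aemeasurable
  have hfst : κ.fst = ν := by
    rw [Measure.fst, hκ, Measure.map_map measurable_fst hm]
    exact map_leftQuantile ν
  obtain ⟨f, hf, hfκ⟩ := exists_randomization κ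
  have key := hfκ P S hS hfst.symm
  set g : Ω × unitInterval → ℝ × ℝ := fun z => (S z.1, f (S z.1) z.2) with hg
  have hgm : Measurable g :=
    (hS.comp measurable_fst).prodMk (hf.comp ((hS.comp measurable_fst).prodMk measurable_snd))
  -- the conditioning event: the uniform level `U` of `S` exceeds `p`
  set E : Set (Ω × unitInterval) := g ⁻¹' (Prod.snd ⁻¹' Ioc p 1) with hE
  have hEm : MeasurableSet E := hgm (measurable_snd measurableSet_Ioc)
  set c : ℝ≥0∞ := (ENNReal.ofReal (1 - p))⁻¹ with hc
  have hlaw : ((P.prod volume).restrict E).map g =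
      (volume.restrict (Ioc p 1)).map (fun u => (leftQuantile ν u, u)) := by
    rw [hE, ← Measure.restrict_map hgm (measurable_snd measurableSet_Ioc), key, hκ,
      Measure.restrict_map hm (measurable_snd measurableSet_Ioc)]
    congr 1
    rw [Measure.restrict_restrict (hm (measurable_snd measurableSet_Ioc))]
    congr 1
    ext u
    simp only [mem_inter_iff, mem_preimage, mem_Ioc]
    constructor
    · rintro ⟨h1, -⟩; exact h1
    · rintro h1; exact ⟨h1, hp.1.trans h1.1, h1.2⟩
  have hSlaw : (((P.prod volume).restrict E).map Prod.fst).map S =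
      (volume.restrict (Ioc p 1)).map (leftQuantile ν) := by
    have := congrArg (Measure.map Prod.fst) hlaw
    rw [Measure.map_map measurable_fst hgm, Measure.map_map measurable_fst hm] at this
    rw [Measure.map_map hS measurable_fst]
    exact this
  have hQS : (c • (((P.prod volume).restrict E).map Prod.fst)).map S = upperTail ν p := by
    rw [Measure.map_smul, hSlaw, upperTail, Measure.map_smul]
  have hQ : IsProbabilityMeasure (c • (((P.prod volume).restrict E).map Prod.fst)) := by
    have h1 := isProbabilityMeasure_upperTail ν hp.2
    rw [← hQS] at h1
    exact Measure.isProbabilityMeasure_of_map S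
  refine ⟨_, hQ, hQS, fun A hA => ?_⟩
  have hEc : (P.prod volume).real Eᶜ = p := by
    have h1 : (P.prod volume) E = ENNReal.ofReal (1 - p) := by
      have := congrArg (fun m : Measure (ℝ × ℝ) => m univ) hlaw
      simp only [Measure.map_apply hgm MeasurableSet.univ,
        Measure.map_apply hm MeasurableSet.univ] at this
      simpa using this
    rw [measureReal_compl hEm, Measure.real, Measure.real, h1, ENNReal.toReal_ofReal hr.le]
    simp
  have h1 : P.real A ≤ (P.prod volume).real (Prod.fst ⁻¹' A ∩ E) + p := by
    have h2 : P.real A = (P.prod (volume : Measure unitInterval)).real (Prod.fst ⁻¹' A) := by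
      have h3 : (P.prod (volume : Measure unitInterval)).map Prod.fst = P := by simp
      conv_lhs => rw [← h3]
      rw [map_measureReal_apply measurable_fst hA]
    rw [h2, ← hEc]
    refine (measureReal_mono (fun z hz => ?_)).trans (measureReal_union_le _ _)
    by_cases hzE : z ∈ E
    · exact Or.inl ⟨hz, hzE⟩
    · exact Or.inr hzE
  have h2 : (c • (((P.prod volume).restrict E).map Prod.fst)).real A =
      (P.prod volume).real (Prod.fst ⁻¹' A ∩ E) / (1 - p) := by
    rw [measureReal_ennreal_smul_apply, map_measureReal_apply measurable_fst hA,
      measureReal_restrict_apply (measurable_fst hA), hc, ENNReal.toReal_inv,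
      ENNReal.toReal_ofReal hr.le, div_eq_inv_mul]
  rw [h2]
  gcongr
  linarith

end Coupling

/-! ### From couplings of margins to couplings of tails and back -/

section Aggregation

variable {n : ℕ}

lemma measurable_sum_coord : Measurable (fun x : Fin n → ℝ => ∑ i, x i) :=
  Finset.measurable_sum _ fun i _ => measurable_pi_apply i

lemma isProbabilityMeasure_of_mem_AggSet {μs : Fin n → Measure ℝ} {ν : Measure ℝ}
    (h : ν ∈ AggSet μs) : IsProbabilityMeasure ν := by
  obtain ⟨π, hπ, -, rfl⟩ := h
  exact Measure.isProbabilityMeasure_map measurable_sum_coord.aemeasurable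

/-- Union bound for the lower tail of a sum; subtracting `1` makes the inequality between sums
strict, which also covers the empty sum. -/
lemma measure_Iic_sum_le {μs : Fin n → Measure ℝ} {ν : Measure ℝ} (h : ν ∈ AggSet μs)
    (a : Fin n → ℝ) : ν (Iic (∑ i, a i - 1)) ≤ ∑ i, μs i (Iic (a i)) := by
  obtain ⟨π, hπ, hm, rfl⟩ := h
  rw [Measure.map_apply measurable_sum_coord measurableSet_Iic]
  refine (measure_mono (t := ⋃ i, {x | x i ∈ Iic (a i)}) fun x hx => ?_).trans
    ((measure_iUnion_fintype_le _ _).trans (Finset.sum_le_sum fun i _ => ?_))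
  · have hx' : ∑ i, x i < ∑ i, a i := by
      have : ∑ i, x i ≤ ∑ i, a i - 1 := hx
      linarith
    obtain ⟨i, -, hi⟩ := Finset.exists_lt_of_sum_lt hx'
    exact mem_iUnion.2 ⟨i, hi.le⟩
  · rw [← hm i, Measure.map_apply (measurable_pi_apply i) measurableSet_Iic]
    rfl

lemma measure_Ioi_sum_le {μs : Fin n → Measure ℝ} {ν : Measure ℝ} (h : ν ∈ AggSet μs)
    (a : Fin n → ℝ) : ν (Ioi (∑ i, a i)) ≤ ∑ i, μs i (Ioi (a i)) := by
  obtain ⟨π, hπ, hm, rfl⟩ := h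
  rw [Measure.map_apply measurable_sum_coord measurableSet_Ioi]
  refine (measure_mono (t := ⋃ i, {x | x i ∈ Ioi (a i)}) fun x hx => ?_).trans
    ((measure_iUnion_fintype_le _ _).trans (Finset.sum_le_sum fun i _ => ?_))
  · obtain ⟨i, -, hi⟩ := Finset.exists_lt_of_sum_lt (show ∑ i, a i < ∑ i, x i from hx)
    exact mem_iUnion.2 ⟨i, hi⟩
  · rw [← hm i, Measure.map_apply (measurable_pi_apply i) measurableSet_Ioi]
    rfl

/-- Upper tails are supported on half-lines bounded below. -/
lemma exists_upperTail_Iic_eq_zero (μ : Measure ℝ) [IsProbabilityMeasure μ] {p : ℝ}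
    (hp : p ∈ Ioo (0 : ℝ) 1) : ∃ a, upperTail μ p (Iic a) = 0 := by
  obtain ⟨a, ha⟩ := ((tendsto_cdf_atBot μ).eventually (gt_mem_nhds hp.1)).exists
  refine ⟨a, ?_⟩
  rw [upperTail_apply_Iic μ ⟨hp.1.le, hp.2⟩, ENNReal.ofReal_eq_zero]
  exact div_nonpos_of_nonpos_of_nonneg (by linarith) (by linarith [hp.2])

lemma exists_Iic_eq_zero_of_mem_AggSet_upperTail (μs : Fin n → Measure ℝ)
    (hprob : ∀ i, IsProbabilityMeasure (μs i)) {p : ℝ} (hp : p ∈ Ioo (0 : ℝ) 1) :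
    ∃ a, ∀ ν ∈ AggSet (fun i => upperTail (μs i) p), ν (Iic a) = 0 := by
  choose a ha using fun i => exists_upperTail_Iic_eq_zero (μs i) hp
  refine ⟨∑ i, a i - 1, fun ν hν => ?_⟩
  refine le_antisymm ((measure_Iic_sum_le hν a).trans ?_) (zero_le)
  simp [ha]

lemma bddBelow_of_Iic_eq_zero (ν : Measure ℝ) [IsProbabilityMeasure ν] {a : ℝ}
    (ha : ν (Iic a) = 0) {u : ℝ} (hu : 0 ≤ u) : BddBelow {x | u < cdf ν x} := by
  refine ⟨a, fun x hx => ?_⟩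
  by_contra! h
  have h1 : cdf ν a = 0 := by rw [cdf_eq_real, Measure.real, ha]; rfl
  have h2 := monotone_cdf ν h.le
  have h3 : u < cdf ν x := hx
  linarith

/-- A coupling of the upper tails extends to a coupling of the full laws, by the comonotone
coupling of the lower tails. The aggregate quantiles can only increase. -/
lemma exists_extend_tail (μs : Fin n → Measure ℝ) (hprob : ∀ i, IsProbabilityMeasure (μs i))
    {p : ℝ} (hp : p ∈ Ioo (0 : ℝ) 1) {ν' : Measure ℝ}
    (hν' : ν' ∈ AggSet (fun i => upperTail (μs i) p)) :
    ∃ ν ∈ AggSet μs, ∀ w ∈ Ico (0 : ℝ) 1,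
      rightQuantile ν' w ≤ rightQuantile ν (p + (1 - p) * w) := by
  have hr : 0 < 1 - p := by linarith [hp.2]
  have hν'p := isProbabilityMeasure_of_mem_AggSet hν'
  obtain ⟨a, ha⟩ := exists_Iic_eq_zero_of_mem_AggSet_upperTail μs hprob hp
  have hbdd := fun u hu => bddBelow_of_Iic_eq_zero ν' (ha ν' hν') (u := u) hu
  obtain ⟨π', hπ', hm, rfl⟩ := hν'
  set q : ℝ → Fin n → ℝ := fun u i => leftQuantile (μs i) u with hq
  have hqm : Measurable q := measurable_pi_lambda _ fun i => measurable_leftQuantile (μs i)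
  set L : Measure (Fin n → ℝ) := (volume.restrict (Ioc 0 p)).map q with hL
  have hLu : L univ = ENNReal.ofReal p := by
    rw [hL, Measure.map_apply hqm MeasurableSet.univ]; simp
  set π : Measure (Fin n → ℝ) := ENNReal.ofReal (1 - p) • π' + L with hπ
  have hπp : IsProbabilityMeasure π := by
    constructor
    simp only [hπ, Measure.add_apply, Measure.smul_apply, measure_univ, hLu, smul_eq_mul, mul_one]
    rw [← ENNReal.ofReal_add hr.le hp.1.le]
    simp
  have hmem : π.map (fun x => ∑ i, x i) ∈ AggSet μs := by
    refine ⟨π, hπp, fun i => ?_, rfl⟩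
    rw [hπ, Measure.map_add _ _ (measurable_pi_apply i), Measure.map_smul, hm i, hL,
      Measure.map_map (measurable_pi_apply i) hqm]
    exact smul_upperTail_add (μs i) ⟨hp.1.le, hp.2⟩
  refine ⟨_, hmem, fun w hw => ?_⟩
  have := isProbabilityMeasure_of_mem_AggSet hmem
  refine rightQuantile_le_rightQuantile _ _ (hbdd w hw.1) (by nlinarith [hw.2]) fun x hx => ?_
  have h1 : cdf (π.map (fun x => ∑ i, x i)) x ≤
      (1 - p) * cdf (π'.map (fun x => ∑ i, x i)) x + p := by
    simp only [cdf_eq_real]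
    rw [hπ, Measure.map_add _ _ measurable_sum_coord, Measure.map_smul,
      measureReal_add_apply (by simp [ENNReal.mul_eq_top]) (by finiteness),
      measureReal_ennreal_smul_apply, ENNReal.toReal_ofReal hr.le]
    gcongr
    rw [Measure.real]
    refine ENNReal.toReal_le_of_le_ofReal hp.1.le ((measure_mono (subset_univ _)).trans ?_)
    rw [Measure.map_apply measurable_sum_coord MeasurableSet.univ, preimage_univ, hLu]
  have h2 : (1 - p) * w < (1 - p) * cdf (π'.map (fun x => ∑ i, x i)) x := by linarith
  exact lt_of_mul_lt_mul_left h2 hr.le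

/-- Conversely, conditioning a coupling on the upper event of its sum gives margins that are
stochastically dominated by the upper tails; raising each coordinate to its tail law yields a
coupling of the tails with larger aggregate quantiles. -/
lemma exists_raise_to_tail (μs : Fin n → Measure ℝ) (hprob : ∀ i, IsProbabilityMeasure (μs i))
    {p : ℝ} (hp : p ∈ Ioo (0 : ℝ) 1) {ν : Measure ℝ} (hν : ν ∈ AggSet μs) :
    ∃ ν' ∈ AggSet (fun i => upperTail (μs i) p), ∀ w ∈ Ico (0 : ℝ) 1,
      rightQuantile ν (p + (1 - p) * w) ≤ rightQuantile ν' w := by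
  have hr : 0 < 1 - p := by linarith [hp.2]
  have hνp := isProbabilityMeasure_of_mem_AggSet hν
  obtain ⟨π, hπ, hm, rfl⟩ := hν
  obtain ⟨Q, hQ, hQS, hQA⟩ := exists_conditioned_tail π _ measurable_sum_coord hp
  have hQi : ∀ i, IsProbabilityMeasure (Q.map fun x => x i) := fun i =>
    Measure.isProbabilityMeasure_map (measurable_pi_apply i).aemeasurable
  have hti : ∀ i, IsProbabilityMeasure (upperTail (μs i) p) := fun i =>
    isProbabilityMeasure_upperTail (μs i) hp.2
  have hdom : ∀ i x, cdf (upperTail (μs i) p) x ≤ cdf (Q.map fun x => x i) x := fun i x => by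
    rw [cdf_upperTail _ ⟨hp.1.le, hp.2⟩]
    refine max_le ?_ (cdf_nonneg _ _)
    rw [cdf_eq_real (Q.map fun x => x i),
      map_measureReal_apply (measurable_pi_apply i) measurableSet_Iic, cdf_eq_real, ← hm i,
      map_measureReal_apply (measurable_pi_apply i) measurableSet_Iic]
    exact hQA _ (measurable_pi_apply i measurableSet_Iic)
  choose f hf hfP using fun i => exists_raise _ _ (hdom i)
  have key := fun i => hfP i Q (fun x => x i) (measurable_pi_apply i) rfl
  set Y : (Fin n → ℝ) × unitInterval → Fin n → ℝ := fun z i => f i (z.1 i) z.2 with hY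
  have hYm : Measurable Y := measurable_pi_lambda _ fun i => by
    have h0 : Measurable fun z : (Fin n → ℝ) × unitInterval => (z.1 i, z.2) :=
      ((measurable_pi_apply i).comp measurable_fst).prodMk measurable_snd
    exact (hf i).comp h0
  set π' : Measure (Fin n → ℝ) := (Q.prod volume).map Y with hπ'
  have hπ'p : IsProbabilityMeasure π' := Measure.isProbabilityMeasure_map hYm.aemeasurable
  have hmem : π'.map (fun x => ∑ i, x i) ∈ AggSet (fun i => upperTail (μs i) p) := by
    refine ⟨π', hπ'p, fun i => ?_, rfl⟩
    rw [hπ', Measure.map_map (measurable_pi_apply i) hYm]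
    exact (key i).1
  refine ⟨_, hmem, fun w hw => ?_⟩
  have := isProbabilityMeasure_of_mem_AggSet hmem
  refine rightQuantile_le_rightQuantile _ _
    (bddBelow_lt_cdf _ (by nlinarith [hw.1, hp.1])) hw.2 fun x hx => ?_
  have h1 : cdf (π'.map (fun x => ∑ i, x i)) x ≤
      cdf (upperTail (π.map (fun x => ∑ i, x i)) p) x := by
    have := isProbabilityMeasure_upperTail (π.map (fun x => ∑ i, x i)) hp.2
    simp only [cdf_eq_real]
    rw [← hQS, hπ', Measure.map_map measurable_sum_coord hYm,
      map_measureReal_apply (measurable_sum_coord.comp hYm) measurableSet_Iic,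
      map_measureReal_apply measurable_sum_coord measurableSet_Iic]
    have h3 : Q.real ((fun x => ∑ i, x i) ⁻¹' Iic x) =
        (Q.prod (volume : Measure unitInterval)).real
          (Prod.fst ⁻¹' ((fun x => ∑ i, x i) ⁻¹' Iic x)) := by
      have h4 : (Q.prod (volume : Measure unitInterval)).map Prod.fst = Q := by simp
      conv_lhs => rw [← h4]
      rw [map_measureReal_apply measurable_fst (measurable_sum_coord measurableSet_Iic)]
    rw [h3]
    refine ENNReal.toReal_mono (measure_ne_top _ _) (measure_mono_ae ?_)
    filter_upwards [ae_all_iff.2 fun i => (key i).2] with z hz hzx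
    have hle : ∑ i, z.1 i ≤ ∑ i, Y z i := Finset.sum_le_sum fun i _ => hz i
    exact hle.trans hzx
  rw [cdf_upperTail _ ⟨hp.1.le, hp.2⟩] at h1
  rcases le_max_iff.1 h1 with h2 | h2
  · have h3 := hx.trans_le h2
    rw [lt_div_iff₀ hr] at h3
    linarith
  · linarith [hw.1]

end Aggregation

/-! ### Integrability of quantiles and infinite means -/

section Integrability

/-- The mean `E[X⁺] ∈ [0, ∞]` of the positive part of a variable with law `ν`. -/
def posMean (ν : Measure ℝ) : ℝ≥0∞ := ∫⁻ x, ENNReal.ofReal x ∂ν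

lemma posMean_eq (ν : Measure ℝ) [IsProbabilityMeasure ν] :
    posMean ν = ∫⁻ u in Ioo 0 1, ENNReal.ofReal (rightQuantile ν u) := by
  unfold posMean
  conv_lhs => rw [← map_rightQuantile ν]
  rw [lintegral_map' (by fun_prop) (aemeasurable_rightQuantile ν)]

/-- For a monotone function bounded below, integrability only depends on the positive part. -/
lemma intervalIntegrable_iff_of_le {h : ℝ → ℝ} {p c : ℝ} (hp : p ≤ 1)
    (hm : MonotoneOn h (Ioo p 1)) (hc : ∀ x ∈ Ioo p 1, c ≤ h x) :
    IntervalIntegrable h volume p 1 ↔ ∫⁻ x in Ioo p 1, ENNReal.ofReal (h x) ≠ ⊤ := by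
  rw [intervalIntegrable_iff_integrableOn_Ioo_of_le hp]
  refine ⟨fun hi => (Integrable.lintegral_lt_top hi).ne, fun hi => ?_⟩
  refine ⟨(aemeasurable_restrict_of_monotoneOn measurableSet_Ioo hm).aestronglyMeasurable, ?_⟩
  have hle : ∫⁻ x in Ioo p 1, ‖h x‖ₑ ≤
      ∫⁻ x in Ioo p 1, (ENNReal.ofReal (h x) + ENNReal.ofReal (-c)) := by
    refine setLIntegral_mono' measurableSet_Ioo fun x hx => ?_
    rw [← ofReal_norm, Real.norm_eq_abs]
    rcases le_total 0 (h x) with h0 | h0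
    · rw [abs_of_nonneg h0]; exact le_self_add
    · rw [abs_of_nonpos h0]
      exact (ENNReal.ofReal_le_ofReal (by linarith [hc x hx])).trans le_add_self
  refine lt_of_le_of_lt hle ?_
  rw [lintegral_add_right _ measurable_const]
  refine ENNReal.add_lt_top.2 ⟨lt_top_iff_ne_top.2 hi, ?_⟩
  simp [ENNReal.mul_lt_top]

lemma intervalIntegrable_rightQuantile_zero_one_iff (ν : Measure ℝ) [IsProbabilityMeasure ν]
    {a : ℝ} (ha : ν (Iic a) = 0) :
    IntervalIntegrable (rightQuantile ν) volume 0 1 ↔ posMean ν ≠ ⊤ := by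
  rw [posMean_eq]
  refine intervalIntegrable_iff_of_le zero_le_one (rightQuantile_monotoneOn_Ioo ν)
    (c := rightQuantile ν 0) fun x hx => ?_
  exact rightQuantile_mono ν (bddBelow_of_Iic_eq_zero ν ha le_rfl) hx.1.le hx.2

/-- Below level `p` the quantiles contribute at most `C⁺` to the mean of the positive part. -/
lemma posMean_le_add (ν : Measure ℝ) [IsProbabilityMeasure ν] {p C : ℝ} (hp : p ∈ Ioo (0 : ℝ) 1)
    (hC : rightQuantile ν p ≤ C) :
    posMean ν ≤ ENNReal.ofReal C +
      ∫⁻ u in Ioo p 1, ENNReal.ofReal (rightQuantile ν u) := by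
  rw [posMean_eq, ← Ioc_union_Ioo_eq_Ioo hp.1.le hp.2]
  refine (lintegral_union_le _ _ _).trans ?_
  gcongr
  calc ∫⁻ u in Ioc 0 p, ENNReal.ofReal (rightQuantile ν u)
      ≤ ∫⁻ u in Ioc 0 p, ENNReal.ofReal C := by
        refine setLIntegral_mono' measurableSet_Ioc fun u hu => ENNReal.ofReal_le_ofReal ?_
        exact (rightQuantile_mono ν (bddBelow_lt_cdf ν hu.1) hu.2 hp.2).trans hC
    _ ≤ ENNReal.ofReal C := by
        rw [setLIntegral_const]
        refine mul_le_of_le_one_right' ?_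
        simpa using hp.2.le

lemma intervalIntegrable_rightQuantile_iff (ν : Measure ℝ) [IsProbabilityMeasure ν]
    {p : ℝ} (hp : p ∈ Ioo (0 : ℝ) 1) :
    IntervalIntegrable (rightQuantile ν) volume p 1 ↔ posMean ν ≠ ⊤ := by
  have hm := (rightQuantile_monotoneOn ν hp.1).mono Ioo_subset_Ico_self
  rw [intervalIntegrable_iff_of_le hp.2.le hm (c := rightQuantile ν p) fun x hx =>
    rightQuantile_monotoneOn ν hp.1 ⟨le_rfl, hp.2⟩ ⟨hx.1.le, hx.2⟩ hx.1.le]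
  constructor
  · intro h
    exact ((posMean_le_add ν hp le_rfl).trans_lt
      (ENNReal.add_lt_top.2 ⟨ENNReal.ofReal_lt_top, lt_top_iff_ne_top.2 h⟩)).ne
  · rw [posMean_eq]
    intro h
    exact ne_top_of_le_ne_top h (lintegral_mono_set (Ioo_subset_Ioo_left hp.1.le))

/-- A lower bound on the upper quantile integral by `E[X⁺]`, given a bound on the `p`-quantile. -/
lemma posMean_le_integral (ν : Measure ℝ) [IsProbabilityMeasure ν] {p C : ℝ}
    (hp : p ∈ Ioo (0 : ℝ) 1) (hC : |rightQuantile ν p| ≤ C) (hfin : posMean ν ≠ ⊤) :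
    posMean ν ≤ ENNReal.ofReal (2 * C + ∫ u in p..1, rightQuantile ν u) := by
  have hint := (intervalIntegrable_rightQuantile_iff ν hp).2 hfin
  have hC0 : 0 ≤ C := (abs_nonneg _).trans hC
  have hint' : IntegrableOn (fun u => rightQuantile ν u + C) (Ioo p 1) :=
    ((intervalIntegrable_iff_integrableOn_Ioo_of_le hp.2.le).1 hint).add
      (integrableOn_const (by simp))
  have hlow : ∀ u ∈ Ioo p 1, 0 ≤ rightQuantile ν u + C := fun u hu => by
    have := rightQuantile_monotoneOn ν hp.1 ⟨le_rfl, hp.2⟩ ⟨hu.1.le, hu.2⟩ hu.1.le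
    linarith [(abs_le.1 hC).1]
  have h1 : ∫⁻ u in Ioo p 1, ENNReal.ofReal (rightQuantile ν u) ≤
      ENNReal.ofReal (∫ u in Ioo p 1, (rightQuantile ν u + C)) := by
    rw [ofReal_integral_eq_lintegral_ofReal hint'
      ((ae_restrict_iff' measurableSet_Ioo).2 (Filter.Eventually.of_forall hlow))]
    exact lintegral_mono fun u => ENNReal.ofReal_le_ofReal (by linarith)
  have h2 : ∫ u in Ioo p 1, (rightQuantile ν u + C) =
      (∫ u in p..1, rightQuantile ν u) + (1 - p) * C := by
    rw [← integral_Ioc_eq_integral_Ioo, ← intervalIntegral.integral_of_le hp.2.le,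
      intervalIntegral.integral_add hint intervalIntegrable_const,
      intervalIntegral.integral_const, smul_eq_mul]
  refine (posMean_le_add ν hp ((le_abs_self _).trans hC)).trans ((add_le_add_right h1 _).trans ?_)
  have h3 : 0 ≤ ∫ u in Ioo p 1, (rightQuantile ν u + C) :=
    setIntegral_nonneg measurableSet_Ioo hlow
  rw [← ENNReal.ofReal_add hC0 h3, h2]
  exact ENNReal.ofReal_le_ofReal (by nlinarith [hp.1, hp.2])

lemma posMean_upperTail_eq_top_iff (μ : Measure ℝ) [IsProbabilityMeasure μ] {p : ℝ}
    (hp : p ∈ Ioo (0 : ℝ) 1) : posMean (upperTail μ p) = ⊤ ↔ posMean μ = ⊤ := by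
  have hr : ENNReal.ofReal (1 - p) ≠ 0 := by simpa using hp.2
  have hlow : ∫⁻ u in Ioc 0 p, ENNReal.ofReal (leftQuantile μ u) ≠ ⊤ := by
    refine ne_top_of_le_ne_top (b := ∫⁻ u in Ioc 0 p, ENNReal.ofReal (leftQuantile μ p)) ?_ ?_
    · simp [ENNReal.mul_eq_top]
    · refine setLIntegral_mono' measurableSet_Ioc fun u hu => ENNReal.ofReal_le_ofReal ?_
      exact (leftQuantile_le_iff μ ⟨hu.1, hu.2.trans_lt hp.2⟩).2
        (hu.2.trans ((leftQuantile_le_iff μ hp).1 le_rfl))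
  have h : posMean μ = ENNReal.ofReal (1 - p) * posMean (upperTail μ p) +
      ∫⁻ u in Ioc 0 p, ENNReal.ofReal (leftQuantile μ u) := by
    conv_lhs => rw [← smul_upperTail_add μ ⟨hp.1.le, hp.2⟩]
    rw [posMean, lintegral_add_measure, lintegral_smul_measure,
      lintegral_map (by fun_prop) (measurable_leftQuantile μ)]
    rfl
  rw [h, ENNReal.add_eq_top, ENNReal.mul_eq_top]
  simp [hlow, hr]

variable {n : ℕ}

/-- Quantiles of the aggregate are bounded uniformly over all couplings of given margins. -/
lemma exists_abs_rightQuantile_le (μs : Fin n → Measure ℝ)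
    (hprob : ∀ i, IsProbabilityMeasure (μs i)) {p : ℝ} (hp : p ∈ Ioo (0 : ℝ) 1) :
    ∃ C, ∀ ν ∈ AggSet μs, |rightQuantile ν p| ≤ C := by
  have hn : (0 : ℝ) < n + 1 := by positivity
  have hr : 0 < 1 - p := by linarith [hp.2]
  choose a ha using fun i =>
    ((tendsto_cdf_atBot (μs i)).eventually (gt_mem_nhds (div_pos hp.1 hn))).exists
  choose b hb using fun i => ((tendsto_cdf_atTop (μs i)).eventually
    (lt_mem_nhds (show 1 - (1 - p) / (n + 1) < 1 by linarith [div_pos hr hn]))).exists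
  refine ⟨max |∑ i, a i - 1| |∑ i, b i|, fun ν hν => abs_le.2 ⟨?_, ?_⟩⟩
  all_goals have hνp := isProbabilityMeasure_of_mem_AggSet hν
  · have h1 : cdf ν (∑ i, a i - 1) < p := by
      have h2 := ENNReal.toReal_mono (by simp) (measure_Iic_sum_le hν a)
      rw [ENNReal.toReal_sum (by simp)] at h2
      rw [cdf_eq_real]
      refine lt_of_le_of_lt h2 ?_
      calc ∑ i, (μs i (Iic (a i))).toReal ≤ ∑ _i : Fin n, p / (n + 1) := by
            refine Finset.sum_le_sum fun i _ => ?_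
            have := (ha i).le
            rwa [cdf_eq_real] at this
        _ = n * p / (n + 1) := by simp; ring
        _ < p := by rw [div_lt_iff₀ hn]; nlinarith [hp.1]
    have h3 : ∑ i, a i - 1 ≤ rightQuantile ν p := by
      by_contra! h
      exact absurd (le_cdf_of_rightQuantile_le ν hp.2 h.le) (not_le.2 h1)
    have h6 : -(∑ i, a i - 1) ≤ max |∑ i, a i - 1| |∑ i, b i| :=
      (neg_le_abs _).trans (le_max_left _ _)
    linarith
  · have h1 : p < cdf ν (∑ i, b i) := by
      have h2 := ENNReal.toReal_mono (by simp) (measure_Ioi_sum_le hν b)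
      rw [ENNReal.toReal_sum (by simp)] at h2
      have h4 : ∀ (m : Measure ℝ) [IsProbabilityMeasure m] (x : ℝ),
          (m (Ioi x)).toReal = 1 - cdf m x := fun m _ x => by
        rw [cdf_eq_real, ← compl_Iic]
        exact probReal_compl_eq_one_sub measurableSet_Iic
      rw [h4] at h2
      have h5 : ∑ i, (μs i (Ioi (b i))).toReal < 1 - p := by
        calc ∑ i, (μs i (Ioi (b i))).toReal ≤ ∑ _i : Fin n, (1 - p) / (n + 1) := by
              refine Finset.sum_le_sum fun i _ => ?_
              rw [h4]
              linarith [hb i]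
          _ = n * (1 - p) / (n + 1) := by simp; ring
          _ < 1 - p := by rw [div_lt_iff₀ hn]; nlinarith
      linarith
    exact (rightQuantile_le_of_lt_cdf ν hp.1 h1).trans ((le_abs_self _).trans (le_max_right _ _))

lemma ofReal_sum_le_sum_ofReal (x : Fin n → ℝ) :
    ENNReal.ofReal (∑ i, x i) ≤ ∑ i, ENNReal.ofReal (x i) :=
  Finset.le_sum_of_subadditive ENNReal.ofReal (by simp) (fun _ _ => ENNReal.ofReal_add_le) _ _

lemma posMean_map {Ω : Type*} [MeasurableSpace Ω] (P : Measure Ω) {X : Ω → ℝ}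
    (hX : Measurable X) : posMean (P.map X) = ∫⁻ ω, ENNReal.ofReal (X ω) ∂P := by
  rw [posMean, lintegral_map (by fun_prop) hX]

lemma posMean_ne_top_of_mem_AggSet {μs : Fin n → Measure ℝ} (h : ∀ i, posMean (μs i) ≠ ⊤)
    {ν : Measure ℝ} (hν : ν ∈ AggSet μs) : posMean ν ≠ ⊤ := by
  obtain ⟨π, hπ, hm, rfl⟩ := hν
  rw [posMean_map π measurable_sum_coord]
  refine ne_top_of_le_ne_top ?_ (lintegral_mono fun x => ofReal_sum_le_sum_ofReal x)
  rw [lintegral_finsetSum _ fun i _ => by fun_prop]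
  refine ENNReal.sum_ne_top.2 fun i _ => ?_
  rw [← posMean_map π (measurable_pi_apply i), hm i]
  exact h i

/-- If every margin is bounded below, no cancellation can occur: an infinite mean of one margin
forces an infinite mean of the aggregate. -/
lemma posMean_eq_top_of_mem_AggSet {μs : Fin n → Measure ℝ} {a : Fin n → ℝ}
    (ha : ∀ i, μs i (Iic (a i)) = 0) {j : Fin n} (hj : posMean (μs j) = ⊤)
    {ν : Measure ℝ} (hν : ν ∈ AggSet μs) : posMean ν = ⊤ := by
  obtain ⟨π, hπ, hm, rfl⟩ := hν
  by_contra hfin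
  rw [posMean_map π measurable_sum_coord] at hfin
  rw [← hm j, posMean_map π (measurable_pi_apply j)] at hj
  have hae : ∀ᵐ x ∂π, ∀ i, a i < x i := by
    rw [ae_all_iff]
    intro i
    have h1 := ha i
    rw [← hm i, Measure.map_apply (measurable_pi_apply i) measurableSet_Iic] at h1
    filter_upwards [measure_eq_zero_iff_ae_notMem.1 h1] with x hx
    exact not_le.1 hx
  refine absurd hj (ne_top_of_le_ne_top (b := ∫⁻ x, (ENNReal.ofReal (∑ i, x i) +
    ENNReal.ofReal (∑ i, |a i|)) ∂π) ?_ (lintegral_mono_ae ?_))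
  · rw [lintegral_add_right _ measurable_const]
    simpa using hfin
  · filter_upwards [hae] with x hx
    refine (ENNReal.ofReal_le_ofReal ?_).trans ENNReal.ofReal_add_le
    rw [← Finset.sum_add_distrib]
    have h2 : ∀ i, 0 ≤ x i + |a i| := fun i => by linarith [hx i, neg_abs_le (a i)]
    have h3 := Finset.single_le_sum (f := fun i => x i + |a i|) (fun i _ => h2 i)
      (Finset.mem_univ j)
    linarith [abs_nonneg (a j)]

/-- The cube `[-K, K]ⁿ`. -/
def cube (n K : ℕ) : Set (Fin n → ℝ) := {x | ∀ i, |x i| ≤ K}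

lemma measurableSet_cube (K : ℕ) : MeasurableSet (cube n K) := by
  have : cube n K = ⋂ i, {x : Fin n → ℝ | |x i| ≤ (K : ℝ)} := by ext x; simp [cube]
  rw [this]
  exact MeasurableSet.iInter fun i => measurableSet_le (by fun_prop) measurable_const

lemma cube_mono : Monotone (cube n) := fun K L hKL x hx i =>
  (hx i).trans (by exact_mod_cast hKL)

lemma iUnion_cube : ⋃ K, cube n K = univ := by
  refine eq_univ_of_forall fun x => ?_
  obtain ⟨K, hK⟩ := exists_nat_ge (∑ i, |x i|)
  exact mem_iUnion.2 ⟨K, fun i =>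
    (Finset.single_le_sum (f := fun i => |x i|) (fun i _ => abs_nonneg _)
      (Finset.mem_univ i)).trans hK⟩

lemma sum_update (x : Fin n → ℝ) (j : Fin n) (b : ℝ) :
    ∑ i, Function.update x j b i = b + (∑ i, x i - x j) := by
  rw [Finset.sum_update_of_mem (Finset.mem_univ j), ← Finset.sum_erase_eq_sub (Finset.mem_univ j),
    Finset.sdiff_singleton_eq_erase]

/-- If some coupling has `E[S⁺] < ∞` although one margin `μⱼ` has infinite mean, then couplings
with `E[S⁺]` finite but arbitrarily large exist: on a large cube, make the `j`-th coordinate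
independent of the others, which removes the cancellation there, and leave the coupling
unchanged off the cube. -/
lemma exists_large_posMean {μs : Fin n → Measure ℝ} {ν : Measure ℝ} (hν : ν ∈ AggSet μs)
    (hfin : posMean ν ≠ ⊤) {j : Fin n} (hj : posMean (μs j) = ⊤) (M : ℝ) :
    ∃ ν' ∈ AggSet μs, ENNReal.ofReal M ≤ posMean ν' ∧ posMean ν' ≠ ⊤ := by
  obtain ⟨π, hπ, hm, rfl⟩ := hν
  rw [posMean_map π measurable_sum_coord] at hfin
  rw [← hm j, posMean_map π (measurable_pi_apply j)] at hj
  -- with positive probability the other coordinates lie in a fixed cube, hence sum to at least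
  -- `-n C`, so `h` bounds from below the sum obtained by resampling the `j`-th coordinate
  obtain ⟨C, hC⟩ : ∃ C, 0 < π (cube n C) :=
    exists_measure_pos_of_not_measure_iUnion_null (by rw [iUnion_cube]; simp)
  set h : (Fin n → ℝ) → ℝ≥0∞ := fun y => ENNReal.ofReal (y j - n * C) with hh
  have hhm : Measurable h := by fun_prop
  have hhtop : ∫⁻ y, h y ∂π = ⊤ := by
    by_contra hne
    refine absurd hj (ne_top_of_le_ne_top (b := ∫⁻ x, (h x + ENNReal.ofReal (n * C)) ∂π) ?_
      (lintegral_mono fun x => ?_))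
    · rw [lintegral_add_right _ measurable_const]
      simpa [ENNReal.mul_eq_top] using hne
    · refine (ENNReal.ofReal_le_ofReal ?_).trans ENNReal.ofReal_add_le
      linarith
  -- monotone convergence along the cubes `[-K, K]ⁿ`
  obtain ⟨K, hCK, hK⟩ : ∃ K, C ≤ K ∧
      ENNReal.ofReal M ≤ π (cube n C) * ∫⁻ y in cube n K, h y ∂π := by
    rw [← setLIntegral_univ, ← iUnion_cube,
      setLIntegral_iUnion_of_directed _ cube_mono.directed_le, iSup_eq_top] at hhtop
    obtain ⟨K, hK⟩ := hhtop (ENNReal.ofReal M / π (cube n C))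
      (ENNReal.div_lt_top ENNReal.ofReal_ne_top hC.ne')
    refine ⟨max C K, le_max_left _ _, ?_⟩
    rw [mul_comm]
    refine (ENNReal.div_le_iff hC.ne' (measure_ne_top _ _)).1 (hK.le.trans ?_)
    exact lintegral_mono_set (cube_mono (le_max_right _ _))
  have hEm := measurableSet_cube (n := n) K
  set α : Measure (Fin n → ℝ) := π.restrict (cube n K) with hα
  set m : ℝ≥0∞ := α univ with hmdef
  have hm1 : m ≤ 1 := (measure_mono (subset_univ _)).trans ((Measure.restrict_apply_le _ _).trans
    prob_le_one)
  have hm0 : m ≠ 0 := by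
    rw [hmdef, hα, Measure.restrict_apply_univ]
    exact (hC.trans_le (measure_mono (cube_mono hCK))).ne'
  have hmt : m ≠ ⊤ := ne_top_of_le_ne_top ENNReal.one_ne_top hm1
  set u : (Fin n → ℝ) × (Fin n → ℝ) → Fin n → ℝ := fun z => Function.update z.1 j (z.2 j) with hu
  have hum : Measurable u := by
    refine measurable_pi_lambda _ fun i => ?_
    by_cases hij : i = j
    · subst hij
      simp only [hu, Function.update_self]
      fun_prop
    · simp only [hu, Function.update_of_ne hij]
      fun_prop
  have hsu : ∀ z, ∑ i, u z i = z.2 j + (∑ i, z.1 i - z.1 j) := fun z => sum_update _ _ _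
  -- `τ` equals `π` off the cube; on it, the `j`-th coordinate is resampled independently from
  -- the restriction of `π` to the cube, which preserves all margins
  set τ : Measure (Fin n → ℝ) := π.restrict (cube n K)ᶜ + m⁻¹ • (α.prod α).map u with hτ
  have hτmap : ∀ i, τ.map (fun x => x i) = μs i := fun i => by
    have h1 : (m⁻¹ • (α.prod α).map u).map (fun x => x i) = α.map (fun x => x i) := by
      rw [Measure.map_smul, Measure.map_map (measurable_pi_apply i) hum]
      by_cases hij : i = j
      · subst hij
        have h2 : (fun x : Fin n → ℝ => x i) ∘ u = (fun x => x i) ∘ Prod.snd := by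
          funext z; simp [hu]
        rw [h2, ← Measure.map_map (measurable_pi_apply i) measurable_snd, Measure.map_snd_prod,
          Measure.map_smul, smul_smul, ENNReal.inv_mul_cancel hm0 hmt, one_smul]
      · have h2 : (fun x : Fin n → ℝ => x i) ∘ u = (fun x => x i) ∘ Prod.fst := by
          funext z; simp [hu, hij]
        rw [h2, ← Measure.map_map (measurable_pi_apply i) measurable_fst, Measure.map_fst_prod,
          Measure.map_smul, smul_smul, ENNReal.inv_mul_cancel hm0 hmt, one_smul]
    rw [hτ, Measure.map_add _ _ (measurable_pi_apply i), h1,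
      ← Measure.map_add _ _ (measurable_pi_apply i), hα, Measure.restrict_compl_add_restrict hEm,
      hm i]
  have hτp : IsProbabilityMeasure τ := by
    have : IsProbabilityMeasure (μs j) := by
      rw [← hm j]; exact Measure.isProbabilityMeasure_map (measurable_pi_apply j).aemeasurable
    rw [← hτmap j] at this
    exact Measure.isProbabilityMeasure_of_map (fun x => x j)
  have hτS : posMean (τ.map fun x => ∑ i, x i) =
      ∫⁻ x in (cube n K)ᶜ, ENNReal.ofReal (∑ i, x i) ∂π +
        m⁻¹ * ∫⁻ z, ENNReal.ofReal (∑ i, u z i) ∂(α.prod α) := by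
    rw [posMean_map τ measurable_sum_coord, hτ, lintegral_add_measure, lintegral_smul_measure,
      lintegral_map (by fun_prop) hum, smul_eq_mul]
  refine ⟨τ.map fun x => ∑ i, x i, ⟨τ, hτp, hτmap, rfl⟩, ?_, ?_⟩
  · rw [hτS]
    refine hK.trans (le_trans ?_ le_add_self)
    have h1 : π (cube n C) * ∫⁻ y in cube n K, h y ∂π =
        ∫⁻ z, (cube n C).indicator 1 z.1 * h z.2 ∂(α.prod α) := by
      rw [lintegral_prod_mul ((measurable_one.indicator (measurableSet_cube C)).aemeasurable)
        hhm.aemeasurable, lintegral_indicator_one (measurableSet_cube C), hα,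
        Measure.restrict_apply (measurableSet_cube C), inter_eq_left.2 (cube_mono hCK)]
    rw [h1]
    refine le_trans (lintegral_mono fun z => ?_) (le_mul_of_one_le_left' (ENNReal.one_le_inv.2 hm1))
    by_cases hz : z.1 ∈ cube n C
    · simp only [indicator_of_mem hz, Pi.one_apply, one_mul, hh]
      refine ENNReal.ofReal_le_ofReal ?_
      have h2 : ∑ i, (z.1 i + C) ≥ z.1 j + C :=
        Finset.single_le_sum (f := fun i => z.1 i + (C : ℝ))
          (fun i _ => by linarith [(abs_le.1 (hz i)).1]) (Finset.mem_univ j)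
      rw [Finset.sum_add_distrib] at h2
      simp only [Finset.sum_const, Finset.card_univ, Fintype.card_fin, nsmul_eq_mul] at h2
      rw [hsu]
      have : (0 : ℝ) ≤ C := by positivity
      linarith
    · simp [hz]
  · rw [hτS]
    refine ENNReal.add_ne_top.2 ⟨ne_top_of_le_ne_top hfin (setLIntegral_le_lintegral _ _), ?_⟩
    refine ENNReal.mul_ne_top (ENNReal.inv_ne_top.2 hm0) ?_
    refine ne_top_of_le_ne_top (b := ∫⁻ z, ENNReal.ofReal (n * K) ∂(α.prod α)) ?_
      (lintegral_mono_ae ?_)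
    · rw [lintegral_const]
      exact ENNReal.mul_ne_top ENNReal.ofReal_ne_top (measure_ne_top _ _)
    · have h1 : ∀ᵐ z ∂(α.prod α), z ∈ cube n K ×ˢ cube n K := by
        rw [hα, Measure.prod_restrict]
        exact ae_restrict_mem (hEm.prod hEm)
      filter_upwards [h1] with z hz
      refine ENNReal.ofReal_le_ofReal ?_
      calc ∑ i, u z i ≤ ∑ _i : Fin n, (K : ℝ) := Finset.sum_le_sum fun i _ => by
            by_cases hij : i = j
            · subst hij; simpa [hu] using (abs_le.1 (hz.2 i)).2
            · simpa [hu, hij] using (abs_le.1 (hz.1 i)).2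
        _ = n * K := by simp

end Integrability

/-! ### Comparison of suprema -/

section Reduction

/-- The substitution `1 - u = (1 - t - s) + (t + s) w`, which turns the levels of the full law into
those of its `(1 - t - s)`-tail. -/
lemma RVaR_eq_affine (ν : Measure ℝ) {t s : ℝ} (hr : 0 < t + s) :
    RVaR t s ν = (s / (t + s))⁻¹ *
      ∫ w in (0 : ℝ)..s / (t + s), rightQuantile ν ((1 - t - s) + (t + s) * w) := by
  have h1 : ∫ u in t..(t + s), rightQuantile ν (1 - u) =
      (t + s) * ∫ w in (0 : ℝ)..s / (t + s), rightQuantile ν ((1 - t - s) + (t + s) * w) := by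
    rw [intervalIntegral.mul_integral_comp_add_mul,
      intervalIntegral.integral_comp_sub_left (fun v => rightQuantile ν v)]
    congr 1
    · ring
    · field_simp; ring
  rw [RVaR, h1, ← mul_assoc]
  congr 1
  rw [inv_div, div_eq_inv_mul]

/-- `R_{1-a,a}` is the left expected shortfall `LES_a`. -/
lemma RVaR_eq_left (ν : Measure ℝ) (a : ℝ) :
    RVaR (1 - a) a ν = a⁻¹ * ∫ w in (0 : ℝ)..a, rightQuantile ν w := by
  rw [RVaR, intervalIntegral.integral_comp_sub_left (fun v => rightQuantile ν v)]
  congr 2 <;> ring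

lemma RVaR_zero_eq (ν : Measure ℝ) (s : ℝ) :
    RVaR 0 s ν = s⁻¹ * ∫ v in (1 - s)..1, rightQuantile ν v := by
  rw [RVaR, intervalIntegral.integral_comp_sub_left (fun v => rightQuantile ν v)]
  congr 2 <;> ring

lemma sSup_eq_zero_of_forall {S : Set ℝ} (h : ∀ x ∈ S, x = 0) : sSup S = 0 :=
  le_antisymm (Real.sSup_nonpos fun x hx => (h x hx).le)
    (Real.sSup_nonneg fun x hx => (h x hx).ge)

variable {n : ℕ}

/-- When all the quantile integrals involved converge, the pointwise comparison of quantiles in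
both directions identifies the two suprema. -/
lemma sSup_RVaR_eq_of_integrable (μs : Fin n → Measure ℝ)
    (hprob : ∀ i, IsProbabilityMeasure (μs i)) {t s : ℝ} (ht : 0 ≤ t) (hs : 0 < s)
    (hts : t + s < 1)
    (hint : ∀ ν ∈ AggSet μs, IntervalIntegrable (rightQuantile ν) volume (1 - t - s) (1 - t))
    (hint' : ∀ ν ∈ AggSet (fun i => upperTail (μs i) (1 - t - s)),
      IntervalIntegrable (rightQuantile ν) volume 0 (s / (t + s))) :
    sSup ((fun ν => RVaR t s ν) '' AggSet μs) =
      sSup ((fun ν => RVaR (1 - s / (t + s)) (s / (t + s)) ν) ''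
        AggSet (fun i => upperTail (μs i) (1 - t - s))) := by
  have hr : 0 < t + s := by linarith
  have hp : 1 - t - s ∈ Ioo (0 : ℝ) 1 := ⟨by linarith, by linarith⟩
  have hr' : 1 - (1 - t - s) = t + s := by ring
  have ha : 0 < s / (t + s) := div_pos hs hr
  have ha1 : s / (t + s) ≤ 1 := (div_le_one hr).2 (by linarith)
  have hg : ∀ ν ∈ AggSet μs, IntervalIntegrable
      (fun w => rightQuantile ν ((1 - t - s) + (t + s) * w)) volume 0 (s / (t + s)) := by
    intro ν hν
    have h1 := ((hint ν hν).comp_add_left (1 - t - s)).comp_mul_left (c := t + s)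
    have h2 : (1 - t - s - (1 - t - s)) / (t + s) = 0 := by simp
    have h3 : (1 - t - (1 - t - s)) / (t + s) = s / (t + s) := by ring
    rwa [h2, h3] at h1
  refine csSup_eq_csSup_of_forall_exists_le ?_ ?_
  · rintro _ ⟨ν, hν, rfl⟩
    obtain ⟨ν', hν', hle⟩ := exists_raise_to_tail μs hprob hp hν
    refine ⟨_, ⟨ν', hν', rfl⟩, ?_⟩
    simp only [RVaR_eq_affine ν hr, RVaR_eq_left]
    refine mul_le_mul_of_nonneg_left ?_ (inv_nonneg.2 ha.le)
    refine intervalIntegral.integral_mono_on_of_le_Ioo ha.le (hg ν hν) (hint' ν' hν') ?_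
    intro w hw
    simpa only [hr'] using hle w ⟨hw.1.le, hw.2.trans_le ha1⟩
  · rintro _ ⟨ν', hν', rfl⟩
    obtain ⟨ν, hν, hle⟩ := exists_extend_tail μs hprob hp hν'
    refine ⟨_, ⟨ν, hν, rfl⟩, ?_⟩
    simp only [RVaR_eq_affine ν hr, RVaR_eq_left]
    refine mul_le_mul_of_nonneg_left ?_ (inv_nonneg.2 ha.le)
    refine intervalIntegral.integral_mono_on_of_le_Ioo ha.le (hint' ν' hν') (hg ν hν) ?_
    intro w hw
    simpa only [hr'] using hle w ⟨hw.1.le, hw.2.trans_le ha1⟩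

/-- If some margin has an infinite upper mean, both suprema are `0` by the conventions for
divergent integrals and unbounded suprema: all expectations of aggregated tails diverge, while the
convergent values of `R_{0,s}`, if there are any, are unbounded above. -/
lemma sSup_RVaR_zero_eq_of_eq_top (μs : Fin n → Measure ℝ)
    (hprob : ∀ i, IsProbabilityMeasure (μs i)) {s : ℝ} (hs : 0 < s) (hs1 : s < 1)
    {j : Fin n} (hj : posMean (μs j) = ⊤) :
    sSup ((fun ν => RVaR 0 s ν) '' AggSet μs) = 0 ∧
      sSup ((fun ν => RVaR 0 1 ν) '' AggSet (fun i => upperTail (μs i) (1 - s))) = 0 := by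
  have hp : 1 - s ∈ Ioo (0 : ℝ) 1 := ⟨by linarith, by linarith⟩
  constructor
  · by_cases h : ∃ ν ∈ AggSet μs, posMean ν ≠ ⊤
    · obtain ⟨ν, hν, hfin⟩ := h
      refine Real.sSup_of_not_bddAbove ?_
      rintro ⟨B, hB⟩
      obtain ⟨C, hC⟩ := exists_abs_rightQuantile_le μs hprob hp
      obtain ⟨ν', hν', hM, hfin'⟩ :=
        exists_large_posMean hν hfin hj (max (2 * C + s * B) 0 + 1)
      have := isProbabilityMeasure_of_mem_AggSet hν'
      have h1 := hM.trans (posMean_le_integral ν' hp (hC ν' hν') hfin')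
      have h2 : RVaR 0 s ν' ≤ B := hB ⟨ν', hν', rfl⟩
      rw [RVaR_zero_eq, inv_mul_le_iff₀ hs] at h2
      have h3 : 0 < max (2 * C + s * B) 0 + 1 := by positivity
      have h4 := (ENNReal.ofReal_le_ofReal_iff' ).1 h1
      rcases h4 with h4 | h4
      · linarith [le_max_left (2 * C + s * B) 0]
      · linarith
    · push Not at h
      refine sSup_eq_zero_of_forall ?_
      rintro _ ⟨ν, hν, rfl⟩
      have := isProbabilityMeasure_of_mem_AggSet hν
      simp only [RVaR_zero_eq]
      rw [intervalIntegral.integral_undef, mul_zero]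
      rw [intervalIntegrable_rightQuantile_iff ν hp]
      exact fun h' => h' (h ν hν)
  · refine sSup_eq_zero_of_forall ?_
    rintro _ ⟨ν, hν, rfl⟩
    have := isProbabilityMeasure_of_mem_AggSet hν
    choose a ha using fun i => exists_upperTail_Iic_eq_zero (μs i) hp
    obtain ⟨b, hb⟩ := exists_Iic_eq_zero_of_mem_AggSet_upperTail μs hprob hp
    have h1 := posMean_eq_top_of_mem_AggSet ha
      ((posMean_upperTail_eq_top_iff (μs j) hp).2 hj) hν
    simp only [RVaR_zero_eq, sub_self]
    rw [intervalIntegral.integral_undef, mul_zero]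
    rw [intervalIntegrable_rightQuantile_zero_one_iff ν (hb ν hν)]
    exact fun h' => h' h1

end Reduction

/-- Proposition 3.1: reduction of worst-case RVaR aggregation to
left-tail ES aggregation of the tail distributions, and of worst-case quantile
aggregation to level-0 quantile aggregation of the tail distributions.
Here `LES_α = R_{1-α,α}`. -/
theorem worst_case_reduction_to_tails {n : ℕ}
    (μs : Fin n → MeasureTheory.Measure ℝ)
    (hprob : ∀ i, MeasureTheory.IsProbabilityMeasure (μs i))
    (t s : ℝ) (ht : t ∈ Set.Ico (0 : ℝ) 1) (hs : s ∈ Set.Ioc (0 : ℝ) (1 - t)) :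
    sSup ((fun ν => RVaR t s ν) '' AggSet μs) =
      sSup ((fun ν => RVaR (1 - s / (t + s)) (s / (t + s)) ν) ''
        AggSet (fun i => upperTail (μs i) (1 - t - s))) ∧
    sSup ((fun ν => rightQuantile ν t) '' AggSet μs) =
      sSup ((fun ν => rightQuantile ν 0) '' AggSet (fun i => upperTail (μs i) t)) := by
  obtain ⟨ht0, ht1⟩ := ht
  obtain ⟨hs0, hs1⟩ := hs
  have hr : 0 < t + s := by linarith
  constructor
  · rcases hs1.eq_or_lt with rfl | hlt
    · -- here `t + s = 1`: the tails are the margins themselves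
      have h1 : ∀ i, upperTail (μs i) (1 - t - (1 - t)) = μs i := fun i => by
        rw [sub_self]; exact upperTail_zero (μs i)
      have h2 : (1 - t) / (t + (1 - t)) = 1 - t := by simp
      simp only [h1, h2, sub_sub_cancel]
    · have hp : 1 - t - s ∈ Ioo (0 : ℝ) 1 := ⟨by linarith, by linarith⟩
      rcases ht0.eq_or_lt with rfl | ht0
      · have hss : s / (0 + s) = 1 := by rw [zero_add, div_self hs0.ne']
        by_cases htop : ∀ i, posMean (μs i) ≠ ⊤
        · refine sSup_RVaR_eq_of_integrable μs hprob le_rfl hs0 (by linarith) ?_ ?_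
          · intro ν hν
            have := isProbabilityMeasure_of_mem_AggSet hν
            have h1 := (intervalIntegrable_rightQuantile_iff ν hp).2
              (posMean_ne_top_of_mem_AggSet htop hν)
            simpa only [sub_zero] using h1
          · intro ν hν
            have := isProbabilityMeasure_of_mem_AggSet hν
            obtain ⟨b, hb⟩ := exists_Iic_eq_zero_of_mem_AggSet_upperTail μs hprob hp
            rw [hss, intervalIntegrable_rightQuantile_zero_one_iff ν (hb ν hν)]
            exact posMean_ne_top_of_mem_AggSet
              (fun i h => htop i ((posMean_upperTail_eq_top_iff (μs i) hp).1 h)) hν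
        · push Not at htop
          obtain ⟨j, hj⟩ := htop
          obtain ⟨h1, h2⟩ := sSup_RVaR_zero_eq_of_eq_top μs hprob hs0 (by linarith) hj
          simp only [hss, sub_self, sub_zero]
          rw [h1, h2]
      · -- away from level `1` the quantiles are bounded on the range of integration
        refine sSup_RVaR_eq_of_integrable μs hprob ht0.le hs0 (by linarith) ?_ ?_
        · intro ν hν
          have := isProbabilityMeasure_of_mem_AggSet hν
          refine MonotoneOn.intervalIntegrable ((rightQuantile_monotoneOn ν hp.1).mono ?_)
          rw [uIcc_of_le (by linarith)]
          exact fun x hx => ⟨hx.1, hx.2.trans_lt (by linarith)⟩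
        · intro ν hν
          have := isProbabilityMeasure_of_mem_AggSet hν
          obtain ⟨b, hb⟩ := exists_Iic_eq_zero_of_mem_AggSet_upperTail μs hprob hp
          refine MonotoneOn.intervalIntegrable ?_
          rw [uIcc_of_le (by positivity)]
          exact fun x hx y hy hxy => rightQuantile_mono ν
            (bddBelow_of_Iic_eq_zero ν (hb ν hν) hx.1) hxy
            (hy.2.trans_lt ((div_lt_one hr).2 (by linarith)))
  · rcases ht0.eq_or_lt with rfl | ht0
    · have h1 : ∀ i, upperTail (μs i) 0 = μs i := fun i => upperTail_zero (μs i)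
      simp only [h1]
    · have hp : t ∈ Ioo (0 : ℝ) 1 := ⟨ht0, ht1⟩
      refine csSup_eq_csSup_of_forall_exists_le ?_ ?_
      · rintro _ ⟨ν, hν, rfl⟩
        obtain ⟨ν', hν', hle⟩ := exists_raise_to_tail μs hprob hp hν
        exact ⟨_, ⟨ν', hν', rfl⟩, by simpa using hle 0 (by simp)⟩
      · rintro _ ⟨ν', hν', rfl⟩
        obtain ⟨ν, hν, hle⟩ := exists_extend_tail μs hprob hp hν'
        exact ⟨_, ⟨ν, hν, rfl⟩, by simpa using hle 0 (by simp)⟩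

end
end

section
/- Let μ₁,…,μₙ be probability measures supported in [0,∞), let t ∈ [0,1), and let m ≥ Σᵢ₌₁ⁿ q⁺_{1−(1−t)/n}(μᵢ). For each i let μᵢ^{[m]} denote the distribution of min(Xᵢ, m) where Xᵢ ∼ μᵢ. Then sup_{ν ∈ Λ(μ₁,…,μₙ)} q⁺_t(ν) = sup_{ν ∈ Λ(μ₁^{[m]},…,μₙ^{[m]})} q⁺_t(ν); i.e., truncating the marginals at m does not change the worst-case quantile aggregation. -/
/-!
The two sets of quantiles coincide.

Write `S = ∑ Xᵢ` and `S' = ∑ min Xᵢ m`. Since the `Xᵢ` are nonnegative, `min S m ≤ S' ≤ S`, so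
the cdfs of `S` and `S'` agree below `m`. By the union bound, `S` exceeds `∑ cᵢ` with probability
less than `1 - t` as soon as every `P(Xᵢ > cᵢ)` is less than `(1 - t) / n`; letting `cᵢ` decrease to
`q⁺_{1-(1-t)/n}(μᵢ)` gives `q⁺_t(S) ≤ m`. Hence `S` and `S'` have the same right quantile at `t`
(`rightQuantile_sum_eq_truncated`).

Truncating the coordinates of a coupling of the `μᵢ` gives a coupling of the truncated marginals.
Conversely, each coupling `X'` of the truncated marginals arises in this way up to null sets
(`exists_lift`): wherever `X'ᵢ` has reached the level `m`, replace it by an independent variable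
distributed as `μᵢ` conditioned on `[m, ∞)`.
-/

open MeasureTheory Set
open scoped ENNReal

noncomputable section

/-! ### Quantiles of sums and of truncated sums -/

section Quantile

lemma nonneg_of_lt_cdf {μ : Measure ℝ} (h0 : μ (Iio 0) = 0) {s x : ℝ} (hs : 0 ≤ s)
    (hx : s < (μ (Iic x)).toReal) : 0 ≤ x := by
  by_contra! h
  have : μ (Iic x) = 0 := measure_mono_null (fun y hy => lt_of_le_of_lt hy h) h0
  rw [this] at hx
  simp at hx
  linarith

lemma rightQuantile_nonneg {μ : Measure ℝ} (h0 : μ (Iio 0) = 0) {s : ℝ} (hs : 0 ≤ s) :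
    0 ≤ rightQuantile μ s :=
  Real.sInf_nonneg fun _ hx => nonneg_of_lt_cdf h0 hs hx

lemma lt_cdf_of_rightQuantile_lt {μ : Measure ℝ} [IsProbabilityMeasure μ] {s c : ℝ} (hs : s < 1)
    (hc : rightQuantile μ s < c) : s < (μ (Iic c)).toReal := by
  have hlim : Filter.Tendsto (fun x => (μ (Iic x)).toReal) Filter.atTop (nhds 1) := by
    have := (ENNReal.tendsto_toReal (measure_ne_top μ univ)).comp (tendsto_measure_Iic_atTop μ)
    simpa [Function.comp_def] using this
  have hne : {x : ℝ | s < (μ (Iic x)).toReal}.Nonempty :=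
    (hlim.eventually (lt_mem_nhds hs)).exists
  obtain ⟨y, hy, hyc⟩ := exists_lt_of_csInf_lt hne hc
  exact lt_of_lt_of_le hy
    (ENNReal.toReal_mono (measure_ne_top _ _) (measure_mono (Iic_subset_Iic.2 hyc.le)))

variable {n : ℕ} {μs : Fin n → Measure ℝ} {π : Measure (Fin n → ℝ)}

lemma ae_nonneg_coord (hπ : ∀ i, π.map (fun x => x i) = μs i) (h0 : ∀ i, μs i (Iio 0) = 0) :
    ∀ᵐ x ∂π, ∀ i, 0 ≤ x i := by
  refine ae_all_iff.2 fun i => ?_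
  have h := h0 i
  rw [← hπ i, Measure.map_apply (measurable_pi_apply i) measurableSet_Iio] at h
  rw [ae_iff]
  simpa [preimage] using h

/-- Union bound: if each coordinate exceeds `cᵢ` with probability less than `(1 - t) / n`, the sum
exceeds `∑ cᵢ` with probability less than `1 - t`. -/
lemma lt_measure_sum_le [IsProbabilityMeasure π] (hn : 0 < n)
    (hπ : ∀ i, π.map (fun x => x i) = μs i) {t : ℝ} {c : Fin n → ℝ}
    (hc : ∀ i, 1 - (1 - t) / n < (μs i (Iic (c i))).toReal) :
    t < (π.map (fun x => ∑ i, x i) (Iic (∑ i, c i))).toReal := by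
  have hn' : (n : ℝ) ≠ 0 := by positivity
  have : Nonempty (Fin n) := ⟨⟨0, hn⟩⟩
  have hsum : Measurable (fun x : Fin n → ℝ => ∑ i, x i) := by fun_prop
  have hcoord : ∀ i, π.real {x | c i < x i} < (1 - t) / n := by
    intro i
    have h := hc i
    rw [← hπ i, Measure.map_apply (measurable_pi_apply i) measurableSet_Iic] at h
    have hm : MeasurableSet ((fun x : Fin n → ℝ => x i) ⁻¹' Iic (c i)) :=
      measurable_pi_apply i measurableSet_Iic
    have hcompl := probReal_compl_eq_one_sub (μ := π) hm
    have hset : ((fun x : Fin n → ℝ => x i) ⁻¹' Iic (c i))ᶜ = {x | c i < x i} := by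
      ext x; simp
    rw [hset] at hcompl
    rw [hcompl, Measure.real]
    linarith
  rw [Measure.map_apply hsum measurableSet_Iic]
  set E := (fun x : Fin n → ℝ => ∑ i, x i) ⁻¹' Iic (∑ i, c i) with hE
  have hEm : MeasurableSet E := hsum measurableSet_Iic
  have hsub : Eᶜ ⊆ ⋃ i, {x | c i < x i} := by
    intro x hx
    by_contra hx'
    simp only [mem_iUnion, mem_ofPred_eq, not_exists, not_lt] at hx'
    exact hx (Finset.sum_le_sum fun i _ => hx' i)
  have h1 : π.real Eᶜ ≤ ∑ i, π.real {x | c i < x i} :=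
    (measureReal_mono hsub).trans (measureReal_iUnion_fintype_le _)
  have h2 : ∑ i, π.real {x | c i < x i} < ∑ _i : Fin n, (1 - t) / n :=
    Finset.sum_lt_sum_of_nonempty Finset.univ_nonempty fun i _ => hcoord i
  have h3 : ∑ _i : Fin n, (1 - t) / n = 1 - t := by
    simp only [Finset.sum_const, Finset.card_univ, Fintype.card_fin, nsmul_eq_mul]
    field_simp
  rw [probReal_compl_eq_one_sub hEm] at h1
  change t < π.real E
  linarith

/-- Truncating the summands at `m` leaves the right `t`-quantile of the sum unchanged. -/
lemma rightQuantile_sum_eq_truncated [IsProbabilityMeasure π] (hn : 0 < n)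
    (hprob : ∀ i, IsProbabilityMeasure (μs i))
    (hπ : ∀ i, π.map (fun x => x i) = μs i) (h0 : ∀ i, μs i (Iio 0) = 0)
    {t m : ℝ} (ht : t ∈ Ico (0 : ℝ) 1)
    (hm : ∑ i, rightQuantile (μs i) (1 - (1 - t) / n) ≤ m) :
    rightQuantile (π.map (fun x => ∑ i, min (x i) m)) t =
      rightQuantile (π.map (fun x => ∑ i, x i)) t := by
  have hn1 : (1 : ℝ) ≤ n := by exact_mod_cast hn
  have hs0 : 0 ≤ 1 - (1 - t) / n := by
    have := div_le_self (sub_nonneg.2 ht.2.le) hn1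
    linarith [ht.1]
  have hs1 : 1 - (1 - t) / n < 1 := by
    have : 0 < (1 - t) / n := div_pos (sub_pos.2 ht.2) (by linarith)
    linarith
  have hm0 : 0 ≤ m :=
    (Finset.sum_nonneg fun i _ => rightQuantile_nonneg (h0 i) hs0).trans hm
  have hae := ae_nonneg_coord hπ h0
  have hS : Measurable (fun x : Fin n → ℝ => ∑ i, x i) := by fun_prop
  have hS' : Measurable (fun x : Fin n → ℝ => ∑ i, min (x i) m) := by fun_prop
  have : IsProbabilityMeasure (π.map (fun x => ∑ i, x i)) :=
    Measure.isProbabilityMeasure_map hS.aemeasurable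
  have : IsProbabilityMeasure (π.map (fun x => ∑ i, min (x i) m)) :=
    Measure.isProbabilityMeasure_map hS'.aemeasurable
  set A := {x : ℝ | t < (π.map (fun x => ∑ i, x i) (Iic x)).toReal} with hA
  set B := {x : ℝ | t < (π.map (fun x => ∑ i, min (x i) m) (Iic x)).toReal} with hB
  have hAmem : ∀ ε > 0, m + ε ∈ A := by
    intro ε hε
    have hεn : 0 < ε / n := by positivity
    have h := lt_measure_sum_le hn hπ (t := t)
      (c := fun i => rightQuantile (μs i) (1 - (1 - t) / n) + ε / n)
      (fun i => lt_cdf_of_rightQuantile_lt hs1 (by linarith))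
    refine lt_of_lt_of_le h (ENNReal.toReal_mono (measure_ne_top _ _)
      (measure_mono (Iic_subset_Iic.2 ?_)))
    rw [Finset.sum_add_distrib]
    have : ∑ _i : Fin n, ε / n = ε := by
      simp only [Finset.sum_const, Finset.card_univ, Fintype.card_fin, nsmul_eq_mul]
      field_simp
    linarith
  have hAne : A.Nonempty := ⟨_, hAmem 1 one_pos⟩
  have hAB : A ⊆ B := by
    intro x hx
    refine lt_of_lt_of_le hx (ENNReal.toReal_mono (measure_ne_top _ _) ?_)
    rw [Measure.map_apply hS measurableSet_Iic, Measure.map_apply hS' measurableSet_Iic]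
    exact measure_mono fun y hy =>
      (Finset.sum_le_sum fun i _ => min_le_left (y i) m).trans hy
  have hBbdd : BddBelow B := by
    refine ⟨0, fun x hx => nonneg_of_lt_cdf ?_ ht.1 hx⟩
    rw [Measure.map_apply hS' measurableSet_Iio]
    refine measure_mono_null ?_ (ae_iff.1 hae)
    intro y hy hy'
    exact absurd (Finset.sum_nonneg fun i _ => le_min (hy' i) hm0) (not_le.2 hy)
  have hBA : ∀ b ∈ B, b < m → b ∈ A := by
    intro b hb hbm
    refine lt_of_lt_of_le hb (ENNReal.toReal_mono (measure_ne_top _ _) ?_)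
    rw [Measure.map_apply hS measurableSet_Iic, Measure.map_apply hS' measurableSet_Iic]
    refine measure_mono_ae ?_
    filter_upwards [hae] with y hy hyb
    have hyb' : ∑ i, min (y i) m ≤ b := hyb
    -- A single summand that reaches `m` would already force the truncated sum above `b`.
    have hlt : ∀ i, y i < m := by
      intro i
      by_contra! hi
      have := Finset.single_le_sum (f := fun i => min (y i) m)
        (fun j _ => le_min (hy j) hm0) (Finset.mem_univ i)
      simp only [min_eq_right hi] at this
      linarith
    have : ∑ i, min (y i) m = ∑ i, y i :=
      Finset.sum_congr rfl fun i _ => min_eq_left (hlt i).le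
    change ∑ i, y i ≤ b
    linarith
  have hAbdd : BddBelow A := hBbdd.mono hAB
  change sInf B = sInf A
  refine le_antisymm (csInf_le_csInf hBbdd hAne hAB) (le_csInf (hAne.mono hAB) fun b hb => ?_)
  rcases lt_or_ge b m with h | h
  · exact csInf_le hAbdd (hBA b hb h)
  · exact (le_of_forall_pos_le_add fun ε hε => csInf_le hAbdd (hAmem ε hε)).trans h

end Quantile

/-! ### Lifting couplings of truncated marginals -/

section Lift

/-- A law on `[m, ∞)` that disintegrates the part of `μ` lying there: conditioned `μ`, or a point
mass when `μ` does not charge `[m, ∞)`. -/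
lemma exists_cond_Ici (μ : Measure ℝ) [IsProbabilityMeasure μ] (m : ℝ) :
    ∃ ρ : Measure ℝ, IsProbabilityMeasure ρ ∧ ρ (Iio m) = 0 ∧
      ∀ A, MeasurableSet A → μ (Ici m) * ρ A = μ (A ∩ Ici m) := by
  by_cases h : μ (Ici m) = 0
  · refine ⟨Measure.dirac m, inferInstance, by simp, fun A _ => ?_⟩
    rw [h, zero_mul, measure_mono_null inter_subset_right h]
  · refine ⟨ProbabilityTheory.cond μ (Ici m), ProbabilityTheory.cond_isProbabilityMeasure h,
      ?_, fun A hA => ?_⟩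
    · rw [ProbabilityTheory.cond_apply measurableSet_Ici,
        (Iio_disjoint_Ici le_rfl).symm.inter_eq]
      simp
    · rw [ProbabilityTheory.cond_apply measurableSet_Ici, ← mul_assoc,
        ENNReal.mul_inv_cancel h (measure_ne_top _ _), one_mul, inter_comm]

/-- Replacing a truncated variable that has reached `m` by an independent draw from the law of
`exists_cond_Ici` restores the law `μ`. -/
lemma map_splice {μ ρ : Measure ℝ} [IsProbabilityMeasure μ] [IsProbabilityMeasure ρ] {m : ℝ}
    (hρ : ∀ A, MeasurableSet A → μ (Ici m) * ρ A = μ (A ∩ Ici m)) :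
    (((μ.map (fun x => min x m)).prod ρ).map
      (fun p : ℝ × ℝ => if p.1 < m then p.1 else p.2)) = μ := by
  have hmin : Measurable (fun x : ℝ => min x m) := by fun_prop
  have : IsProbabilityMeasure (μ.map (fun x => min x m)) :=
    Measure.isProbabilityMeasure_map hmin.aemeasurable
  have hg : Measurable (fun p : ℝ × ℝ => if p.1 < m then p.1 else p.2) :=
    Measurable.ite (measurable_fst measurableSet_Iio) measurable_fst measurable_snd
  ext A hA
  rw [Measure.map_apply hg hA]
  have hset : (fun p : ℝ × ℝ => if p.1 < m then p.1 else p.2) ⁻¹' A =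
      ((A ∩ Iio m) ×ˢ univ) ∪ (Ici m ×ˢ A) := by
    ext ⟨x, z⟩
    by_cases h : x < m
    · simp [h]
    · simp [h, not_lt.1 h]
  have hdisj : Disjoint ((A ∩ Iio m) ×ˢ (univ : Set ℝ)) (Ici m ×ˢ A) := by
    rw [Set.disjoint_left]
    rintro ⟨x, z⟩ h1 h2
    exact not_lt.2 (mem_Ici.1 h2.1) (mem_Iio.1 h1.1.2)
  have e1 : (fun x : ℝ => min x m) ⁻¹' (A ∩ Iio m) = A ∩ Iio m := by
    ext x
    rcases lt_or_ge x m with h | h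
    · simp [h, h.le]
    · simp [h, not_lt.2 h]
  have e2 : (fun x : ℝ => min x m) ⁻¹' (Ici m) = Ici m := by
    ext x; simp
  rw [hset, measure_union hdisj (measurableSet_Ici.prod hA), Measure.prod_prod,
    Measure.prod_prod, Measure.map_apply hmin (hA.inter measurableSet_Iio),
    Measure.map_apply hmin measurableSet_Ici, e1, e2, hρ A hA, measure_univ, mul_one]
  have := measure_inter_add_sdiff (μ := μ) A (measurableSet_Iio (a := m))
  rwa [sdiff_eq, compl_Iio] at this

/-- Every coupling of the truncated marginals is the truncation of a coupling of the original
marginals, up to equality of the laws of the sums. -/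
lemma exists_lift {n : ℕ} {μs : Fin n → Measure ℝ}
    (hprob : ∀ i, IsProbabilityMeasure (μs i)) {m : ℝ} {π' : Measure (Fin n → ℝ)}
    [IsProbabilityMeasure π']
    (hπ' : ∀ i, π'.map (fun x => x i) = (μs i).map (fun x => min x m)) :
    ∃ π : Measure (Fin n → ℝ), IsProbabilityMeasure π ∧ (∀ i, π.map (fun x => x i) = μs i) ∧
      π.map (fun x => ∑ i, min (x i) m) = π'.map (fun x => ∑ i, x i) := by
  choose ρ hρprob hρ0 hρ using fun i => exists_cond_Ici (μs i) m
  set P := π'.prod (Measure.pi ρ) with hP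
  set g : (Fin n → ℝ) × (Fin n → ℝ) → Fin n → ℝ :=
    fun p i => if p.1 i < m then p.1 i else p.2 i with hgdef
  have hsplice : Measurable (fun p : ℝ × ℝ => if p.1 < m then p.1 else p.2) :=
    Measurable.ite (measurable_fst measurableSet_Iio) measurable_fst measurable_snd
  have hg : Measurable g := measurable_pi_lambda _ fun i => by
    have h : Measurable (Prod.map (fun x : Fin n → ℝ => x i) (fun z : Fin n → ℝ => z i)) :=
      (measurable_pi_apply i).prodMap (measurable_pi_apply i)
    exact hsplice.comp h
  refine ⟨P.map g, Measure.isProbabilityMeasure_map hg.aemeasurable, fun i => ?_, ?_⟩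
  · have hpi : (Measure.pi ρ).map (fun z => z i) = ρ i :=
      (measurePreserving_eval ρ i).map_eq
    have hpair : P.map (Prod.map (fun x : Fin n → ℝ => x i) (fun z : Fin n → ℝ => z i)) =
        ((μs i).map (fun x => min x m)).prod (ρ i) := by
      rw [hP, ← Measure.map_prod_map _ _ (measurable_pi_apply i) (measurable_pi_apply i), hpi,
        hπ' i]
    rw [Measure.map_map (measurable_pi_apply i) hg, ← map_splice (hρ i), ← hpair,
      Measure.map_map hsplice ((measurable_pi_apply i).prodMap (measurable_pi_apply i))]
    rfl
  · have hfst : ∀ᵐ p ∂P, ∀ i, p.1 i ≤ m := by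
      refine Measure.quasiMeasurePreserving_fst.ae (p := fun x : Fin n → ℝ => ∀ i, x i ≤ m) ?_
      refine ae_all_iff.2 fun i => ?_
      have h : ∀ᵐ y ∂(π'.map (fun x => x i)), y ≤ m := by
        rw [hπ' i, ae_map_iff (by fun_prop) measurableSet_Iic]
        exact ae_of_all _ fun x => min_le_right _ _
      exact ae_of_ae_map (measurable_pi_apply i).aemeasurable h
    have hsnd : ∀ᵐ p ∂P, ∀ i, m ≤ p.2 i := by
      refine Measure.quasiMeasurePreserving_snd.ae (p := fun z : Fin n → ℝ => ∀ i, m ≤ z i) ?_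
      refine ae_all_iff.2 fun i => ?_
      have h : ∀ᵐ y ∂(ρ i), m ≤ y := by
        rw [ae_iff]
        simpa [Iio] using hρ0 i
      exact (measurePreserving_eval ρ i).quasiMeasurePreserving.ae h
    have hfstmap : P.map Prod.fst = π' := by
      rw [hP, Measure.map_fst_prod, measure_univ, one_smul]
    rw [Measure.map_map (by fun_prop) hg]
    conv_rhs => rw [← hfstmap]
    rw [Measure.map_map (by fun_prop) measurable_fst]
    refine Measure.map_congr ?_
    filter_upwards [hfst, hsnd] with p h1 h2
    refine Finset.sum_congr rfl fun i _ => ?_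
    by_cases h : p.1 i < m
    · simp [hgdef, h, h.le]
    · simp [hgdef, h2 i, le_antisymm (h1 i) (not_lt.1 h)]

end Lift

/-- Proposition 4.3: for marginals supported in `[0,∞)` and
`m ≥ Σᵢ q⁺_{1-(1-t)/n}(μᵢ)`, truncating the marginals at `m` does not change the
worst-case quantile aggregation value. -/
theorem truncation_invariance {n : ℕ} (hn : 0 < n)
    (μs : Fin n → MeasureTheory.Measure ℝ)
    (hprob : ∀ i, MeasureTheory.IsProbabilityMeasure (μs i))
    (hnonneg : ∀ i, μs i (Set.Iio 0) = 0)
    (t : ℝ) (ht : t ∈ Set.Ico (0 : ℝ) 1)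
    (m : ℝ) (hm : ∑ i, rightQuantile (μs i) (1 - (1 - t) / n) ≤ m) :
    sSup ((fun ν => rightQuantile ν t) '' AggSet μs) =
      sSup ((fun ν => rightQuantile ν t) ''
        AggSet (fun i => (μs i).map (fun x => min x m))) := by
  congr 1
  ext q
  constructor
  · rintro ⟨_, ⟨π, hπp, hπ, rfl⟩, rfl⟩
    have hmin : Measurable (fun (x : Fin n → ℝ) (i : Fin n) => min (x i) m) := by fun_prop
    refine ⟨_, ⟨π.map (fun x i => min (x i) m),
      Measure.isProbabilityMeasure_map hmin.aemeasurable, fun i => ?_, rfl⟩, ?_⟩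
    · dsimp only
      rw [Measure.map_map (measurable_pi_apply i) hmin, ← hπ i,
        Measure.map_map (f := fun x : Fin n → ℝ => x i) (by fun_prop) (measurable_pi_apply i)]
      rfl
    · dsimp only
      rw [Measure.map_map (by fun_prop) hmin]
      exact rightQuantile_sum_eq_truncated hn hprob hπ hnonneg ht hm
  · rintro ⟨_, ⟨π', hπp, hπ', rfl⟩, rfl⟩
    obtain ⟨π, hπprob, hπ, hsum⟩ := exists_lift hprob hπ'
    refine ⟨_, ⟨π, hπprob, hπ, rfl⟩, ?_⟩
    dsimp only
    rw [← hsum]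
    exact (rightQuantile_sum_eq_truncated hn hprob hπ hnonneg ht hm).symm

end
end
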